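/- arXiv:2001.00410 — 2 statements merged into one kernel-verified Lean document; each statement's English description precedes it below -/
import Mathlib

section
/- Let n ≥ 1 and let f : ℝⁿ → ℝ be a nonnegative, continuous, compactly supported function with ∫_{ℝⁿ} f dx = 1, and let u(t,x) = ∫_{ℝⁿ} (4πt)^{-n/2} exp(-‖x-y‖²/(4t)) f(y) dy. Then for every t > 0 the Fisher information satisfies I(u(t)) = ∫_{ℝⁿ} |∇ log u(t,x)|² u(t,x) dx ≤ n/(2t); in particular, t · (d/dt)H(u(t)) ≤ n/2 for all t > 0, so lim sup_{t→0+} t H'(u(t)) ≤ n/2. -/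
open Real MeasureTheory Filter

/-- The heat semigroup solution on `ℝⁿ` with initial datum `f`. -/
noncomputable def heatSol (n : ℕ) (f : EuclideanSpace ℝ (Fin n) → ℝ)
    (t : ℝ) (x : EuclideanSpace ℝ (Fin n)) : ℝ :=
  ∫ y, (4 * π * t) ^ (-(n : ℝ) / 2) * Real.exp (-‖x - y‖ ^ 2 / (4 * t)) * f y

/-- The Boltzmann–Shannon entropy of the heat solution at time `t`. -/
noncomputable def shannonEntropy (n : ℕ) (f : EuclideanSpace ℝ (Fin n) → ℝ) (t : ℝ) : ℝ :=
  -∫ x, heatSol n f t x * Real.log (heatSol n f t x)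

/-- The Fisher information of the heat solution at time `t`. -/
noncomputable def fisherInfo (n : ℕ) (f : EuclideanSpace ℝ (Fin n) → ℝ) (t : ℝ) : ℝ :=
  ∫ x, ‖gradient (fun y => Real.log (heatSol n f t y)) x‖ ^ 2 * heatSol n f t x

/-!
Let `X = Y + √t Z`, where `Y` has law `μ` and `Z` is an independent centred Gaussian vector with
covariance `2 · Id`; its density is `u = heatFlow μ t`. Differentiating the heat kernel under the
integral gives Tweedie's formula `∇ log u(X) = -𝔼[√t Z | X] / (2t)`. By Jensen's inequality the
Fisher information `𝔼 ‖∇ log u(X)‖²` is thus at most `𝔼 ‖√t Z‖² / (4t²) = dim E / (2t)`.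

For de Bruijn's identity, the entropy is `-𝔼 log u(r², Y + r Z)` with `r = √t`, an integral over
a law that does not depend on `t`. Differentiating it in `r`, the time derivative of `log u`
averages to zero, while the space derivative contributes `-𝔼 ⟪∇ log u(X), Z⟫`. Since `∇ log u(X)`
is a function of `X`, conditioning on `X` turns this into `2r 𝔼 ‖∇ log u(X)‖²`.
-/

set_option maxSynthPendingDepth 3

open Set Module ProbabilityTheory
open scoped Topology RealInnerProductSpace

variable {E : Type*} [NormedAddCommGroup E] [InnerProductSpace ℝ E]

/-! ### The heat kernel -/

/-- The heat kernel of `∂ₜ u = Δ u`, i.e. the density of a centred Gaussian vector with covariance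
`2t · Id`. -/
noncomputable def heatKernel (t : ℝ) (v : E) : ℝ :=
  (4 * π * t) ^ (-(finrank ℝ E : ℝ) / 2) * Real.exp (-‖v‖ ^ 2 / (4 * t))

@[fun_prop]
lemma continuous_heatKernel (t : ℝ) : Continuous (heatKernel t : E → ℝ) := by
  unfold heatKernel
  fun_prop

lemma heatKernel_pos {t : ℝ} (ht : 0 < t) (v : E) : 0 < heatKernel t v := by
  unfold heatKernel
  positivity

lemma heatKernel_le {t : ℝ} (ht : 0 < t) (v : E) :
    heatKernel t v ≤ (4 * π * t) ^ (-(finrank ℝ E : ℝ) / 2) := by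
  refine mul_le_of_le_one_right (by positivity) (Real.exp_le_one_iff.2 ?_)
  exact div_nonpos_of_nonpos_of_nonneg (neg_nonpos.2 (sq_nonneg _)) (by positivity)

lemma heatKernel_eq_exp_neg_mul (t : ℝ) (v : E) : heatKernel t v =
    (4 * π * t) ^ (-(finrank ℝ E : ℝ) / 2) * Real.exp (-(4 * t)⁻¹ * ‖v‖ ^ 2) := by
  rw [heatKernel]
  ring_nf

lemma pow_finrank_mul_heatKernel_sq_smul {r : ℝ} (hr : 0 < r) (z : E) :
    r ^ finrank ℝ E * heatKernel (r ^ 2) (r • z) = heatKernel 1 z := by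
  have h_pow : r ^ finrank ℝ E * (r ^ 2) ^ (-(finrank ℝ E : ℝ) / 2) = 1 := by
    rw [← Real.rpow_natCast, ← Real.rpow_natCast, ← Real.rpow_mul hr.le, ← Real.rpow_add hr]
    convert! Real.rpow_zero r using 2
    push_cast
    ring
  have h_exp : -‖r • z‖ ^ 2 / (4 * r ^ 2) = -‖z‖ ^ 2 / (4 * 1) := by
    rw [norm_smul, Real.norm_of_nonneg hr.le, mul_pow]
    field_simp
  rw [heatKernel, heatKernel, h_exp, Real.mul_rpow (by positivity) (by positivity), mul_one (4 * π)]
  linear_combination (4 * π) ^ (-(finrank ℝ E : ℝ) / 2) * Real.exp (-‖z‖ ^ 2 / (4 * 1)) * h_pow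

lemma norm_sq_mul_heatKernel_le {t : ℝ} (ht : 0 < t) (M : ℝ) (v : E) :
    ‖v‖ ^ 2 * heatKernel t v ≤ M * heatKernel t v +
      8 * t * ((4 * π * t) ^ (-(finrank ℝ E : ℝ) / 2) * Real.exp (-M / (8 * t))) := by
  set w := (‖v‖ ^ 2 - M) / (8 * t) with hw
  have exp_split : Real.exp (-‖v‖ ^ 2 / (4 * t)) =
      Real.exp (-‖v‖ ^ 2 / (8 * t)) * Real.exp (-M / (8 * t)) * Real.exp (-w) := by
    rw [← Real.exp_add, ← Real.exp_add, hw]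
    congr 1
    field_simp
    ring
  have mul_exp_neg_le : w * Real.exp (-w) ≤ 1 := by
    rw [Real.exp_neg, ← div_eq_mul_inv, div_le_one (Real.exp_pos w)]
    linarith [Real.add_one_le_exp w]
  have exp_le_one : Real.exp (-‖v‖ ^ 2 / (8 * t)) ≤ 1 :=
    Real.exp_le_one_iff.2 <|
      div_nonpos_of_nonpos_of_nonneg (neg_nonpos.2 (sq_nonneg _)) (by positivity)
  have excess_le : (‖v‖ ^ 2 - M) * Real.exp (-‖v‖ ^ 2 / (4 * t)) ≤
      8 * t * Real.exp (-M / (8 * t)) := calc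
    _ = 8 * t * Real.exp (-M / (8 * t)) *
        (Real.exp (-‖v‖ ^ 2 / (8 * t)) * (w * Real.exp (-w))) := by
      rw [exp_split, show ‖v‖ ^ 2 - M = 8 * t * w by rw [hw]; field_simp]
      ring
    _ ≤ 8 * t * Real.exp (-M / (8 * t)) * (Real.exp (-‖v‖ ^ 2 / (8 * t)) * 1) := by gcongr
    _ ≤ 8 * t * Real.exp (-M / (8 * t)) * (1 * 1) := by gcongr
    _ = _ := by ring
  calc ‖v‖ ^ 2 * heatKernel t v
      = M * heatKernel t v + (4 * π * t) ^ (-(finrank ℝ E : ℝ) / 2) *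
          ((‖v‖ ^ 2 - M) * Real.exp (-‖v‖ ^ 2 / (4 * t))) := by
        unfold heatKernel
        ring
    _ ≤ M * heatKernel t v + (4 * π * t) ^ (-(finrank ℝ E : ℝ) / 2) *
          (8 * t * Real.exp (-M / (8 * t))) := by gcongr
    _ = _ := by ring

lemma heatKernel_mul_one_add_norm_sq_le {t : ℝ} (ht : 0 < t) (v : E) :
    heatKernel t v * (1 + ‖v‖ ^ 2) ≤ (4 * π * t) ^ (-(finrank ℝ E : ℝ) / 2) * (1 + 8 * t) := by
  have h := norm_sq_mul_heatKernel_le ht 0 v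
  simp only [zero_mul, zero_add, neg_zero, zero_div, Real.exp_zero, mul_one] at h
  linarith [heatKernel_le ht v]

/-- The linear form `(δ, w) ↦ (a / (4t²) - dim E / (2t)) δ - ⟪v, w⟫ / (2t)` on `ℝ × E`. For
`a = ‖v‖²` it is the space-time derivative of `log heatKernel` at `(t, v)`; keeping `a` and `v`
independent makes the form affine in `(a, v)`, so that it can be averaged. -/
noncomputable def logHeatForm (t a : ℝ) (v : E) : ℝ × E →L[ℝ] ℝ :=
  (a / (4 * t ^ 2) - finrank ℝ E / (2 * t)) • ContinuousLinearMap.fst ℝ ℝ E -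
    (1 / (2 * t)) • (innerSL ℝ v ∘L ContinuousLinearMap.snd ℝ ℝ E)

lemma logHeatForm_apply (t a : ℝ) (v : E) (q : ℝ × E) :
    logHeatForm t a v q =
      (a / (4 * t ^ 2) - finrank ℝ E / (2 * t)) * q.1 - 1 / (2 * t) * ⟪v, q.2⟫ := by
  simp [logHeatForm]

@[fun_prop]
lemma continuous_logHeatForm_norm_sq (t : ℝ) :
    Continuous fun v : E => logHeatForm t (‖v‖ ^ 2) v := by
  unfold logHeatForm
  fun_prop

lemma norm_logHeatForm_le {t : ℝ} (ht : 0 < t) (v : E) :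
    ‖logHeatForm t (‖v‖ ^ 2) v‖ ≤
      (1 / (4 * t ^ 2) + finrank ℝ E / (2 * t) + 1 / (2 * t)) * (1 + ‖v‖ ^ 2) := by
  refine ContinuousLinearMap.opNorm_le_bound _ (by positivity) fun q => ?_
  have h_time : |‖v‖ ^ 2 / (4 * t ^ 2) - finrank ℝ E / (2 * t)| ≤
      (1 / (4 * t ^ 2) + finrank ℝ E / (2 * t)) * (1 + ‖v‖ ^ 2) := by
    refine (abs_sub _ _).trans ?_
    rw [abs_of_nonneg (by positivity), abs_of_nonneg (by positivity)]
    have : 0 ≤ 1 / (4 * t ^ 2) + finrank ℝ E / (2 * t) * ‖v‖ ^ 2 := by positivity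
    linear_combination this
  have h_space : ‖v‖ ≤ 1 + ‖v‖ ^ 2 := by nlinarith [sq_nonneg (‖v‖ - 1)]
  rw [logHeatForm_apply]
  calc _ ≤ |‖v‖ ^ 2 / (4 * t ^ 2) - finrank ℝ E / (2 * t)| * ‖q.1‖ +
        1 / (2 * t) * (‖v‖ * ‖q.2‖) := by
        refine (norm_sub_le _ _).trans ?_
        rw [norm_mul, norm_mul, Real.norm_eq_abs,
          Real.norm_of_nonneg (by positivity : 0 ≤ 1 / (2 * t))]
        gcongr
        exact norm_inner_le_norm v q.2
    _ ≤ (1 / (4 * t ^ 2) + finrank ℝ E / (2 * t)) * (1 + ‖v‖ ^ 2) * ‖q‖ +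
        1 / (2 * t) * ((1 + ‖v‖ ^ 2) * ‖q‖) := by
        gcongr
        exacts [norm_fst_le q, norm_snd_le q]
    _ = _ := by ring

lemma norm_heatKernel_smul_logHeatForm_le {t : ℝ} (ht : 0 < t) (v : E) :
    ‖heatKernel t v • logHeatForm t (‖v‖ ^ 2) v‖ ≤
      (4 * π * t) ^ (-(finrank ℝ E : ℝ) / 2) * (1 + 8 * t) *
        (1 / (4 * t ^ 2) + finrank ℝ E / (2 * t) + 1 / (2 * t)) := by
  rw [norm_smul, Real.norm_of_nonneg (heatKernel_pos ht v).le]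
  calc _ ≤ heatKernel t v *
        ((1 / (4 * t ^ 2) + finrank ℝ E / (2 * t) + 1 / (2 * t)) * (1 + ‖v‖ ^ 2)) :=
        mul_le_mul_of_nonneg_left (norm_logHeatForm_le ht v) (heatKernel_pos ht v).le
    _ = heatKernel t v * (1 + ‖v‖ ^ 2) *
        (1 / (4 * t ^ 2) + finrank ℝ E / (2 * t) + 1 / (2 * t)) := by ring
    _ ≤ _ := mul_le_mul_of_nonneg_right (heatKernel_mul_one_add_norm_sq_le ht v) (by positivity)

lemma hasFDerivAt_heatKernel {t : ℝ} (ht : 0 < t) (v : E) :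
    HasFDerivAt (fun q : ℝ × E => heatKernel q.1 q.2)
      (heatKernel t v • logHeatForm t (‖v‖ ^ 2) v) (t, v) := by
  have h_fst : HasFDerivAt (Prod.fst : ℝ × E → ℝ) (.fst ℝ ℝ E) (t, v) := hasFDerivAt_fst
  have h_snd : HasFDerivAt (Prod.snd : ℝ × E → E) (.snd ℝ ℝ E) (t, v) := hasFDerivAt_snd
  have h_factor := (h_fst.const_mul (4 * π)).rpow_const (p := -(finrank ℝ E : ℝ) / 2)
    (Or.inl (by positivity))
  have h_inv := (hasDerivAt_inv (by positivity : 4 * t ≠ 0)).comp_hasFDerivAt (t, v)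
    (h_fst.const_mul 4)
  have h_exp := (h_snd.norm_sq.neg.mul h_inv).exp
  refine (h_factor.mul h_exp).congr_fderiv (ContinuousLinearMap.ext fun q => ?_)
  have h_rpow : (4 * π * t) ^ (-(finrank ℝ E : ℝ) / 2 - 1) =
      (4 * π * t) ^ (-(finrank ℝ E : ℝ) / 2) / (4 * π * t) :=
    Real.rpow_sub_one (by positivity) _
  simp only [logHeatForm_apply, heatKernel, h_rpow, Pi.mul_apply, Pi.neg_apply,
    Function.comp_apply, add_apply, smul_apply, neg_apply, ContinuousLinearMap.coe_fst',
    ContinuousLinearMap.coe_snd', ContinuousLinearMap.comp_apply, coe_innerSL_apply, smul_eq_mul,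
    nsmul_eq_mul, Nat.cast_ofNat]
  field_simp
  ring

/-! ### Moments of the heat kernel -/

section Moments

variable [FiniteDimensional ℝ E] [MeasurableSpace E] [BorelSpace E]

variable (E) in
lemma integrable_exp_neg_mul_norm_sq {b : ℝ} (hb : 0 < b) :
    Integrable (fun v : E => Real.exp (-b * ‖v‖ ^ 2)) := by
  refine .of_integral_ne_zero ?_
  rw [GaussianFourier.integral_rexp_neg_mul_sq_norm hb]
  positivity

variable (E) in
lemma neg_mem_interior_integrableExpSet_norm_sq {b : ℝ} (hb : 0 < b) :
    -b ∈ interior (integrableExpSet (fun v : E => ‖v‖ ^ 2) volume) := by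
  refine mem_interior.2 ⟨Iio 0, fun s hs => ?_, isOpen_Iio, neg_lt_zero.2 hb⟩
  simpa [integrableExpSet] using integrable_exp_neg_mul_norm_sq E (neg_pos.2 hs)

variable (E) in
lemma integrable_norm_sq_mul_exp_neg_mul_norm_sq {b : ℝ} (hb : 0 < b) :
    Integrable (fun v : E => ‖v‖ ^ 2 * Real.exp (-b * ‖v‖ ^ 2)) := by
  simpa using integrable_pow_mul_exp_of_mem_interior_integrableExpSet
    (neg_mem_interior_integrableExpSet_norm_sq E hb) 1

-- The Gaussian integral is the moment generating function of `‖·‖²`; differentiate it.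
variable (E) in
lemma integral_norm_sq_mul_exp_neg_mul_norm_sq {b : ℝ} (hb : 0 < b) :
    ∫ v : E, ‖v‖ ^ 2 * Real.exp (-b * ‖v‖ ^ 2) =
      finrank ℝ E / (2 * b) * (π / b) ^ (finrank ℝ E / 2 : ℝ) := by
  have h_mgf : HasDerivAt (mgf (fun v : E => ‖v‖ ^ 2) volume)
      (∫ v : E, ‖v‖ ^ 2 * Real.exp (-b * ‖v‖ ^ 2)) (-b) :=
    hasDerivAt_mgf (neg_mem_interior_integrableExpSet_norm_sq E hb)
  have h_mgf_eq : mgf (fun v : E => ‖v‖ ^ 2) volume =ᶠ[𝓝 (-b)]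
      fun s => (-π * s⁻¹) ^ (finrank ℝ E / 2 : ℝ) := by
    filter_upwards [Iio_mem_nhds (neg_lt_zero.2 hb)] with s hs
    rw [mgf, ← neg_neg s, GaussianFourier.integral_rexp_neg_mul_sq_norm (neg_pos.2 hs),
      neg_neg, div_neg, div_eq_mul_inv, neg_mul]
  have h_pow := ((hasDerivAt_inv (neg_ne_zero.2 hb.ne')).const_mul (-π)).rpow_const
    (p := (finrank ℝ E / 2 : ℝ))
    (Or.inl (mul_ne_zero (neg_ne_zero.2 pi_ne_zero) (inv_ne_zero (neg_ne_zero.2 hb.ne'))))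
  rw [h_mgf.unique (h_pow.congr_of_eventuallyEq h_mgf_eq), inv_neg, neg_mul_neg π b⁻¹,
    Real.rpow_sub_one (by positivity), div_eq_mul_inv π b]
  field_simp

lemma rpow_neg_half_mul_rpow_half {t : ℝ} (ht : 0 < t) (d : ℝ) :
    (4 * π * t) ^ (-d / 2) * (π / (4 * t)⁻¹) ^ (d / 2) = 1 := by
  rw [show π / (4 * t)⁻¹ = 4 * π * t by field_simp, ← Real.rpow_add (by positivity)]
  simp [neg_div]

variable (E) in
lemma integrable_heatKernel {t : ℝ} (ht : 0 < t) : Integrable (heatKernel t : E → ℝ) := by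
  simpa only [← heatKernel_eq_exp_neg_mul] using
    (integrable_exp_neg_mul_norm_sq E (by positivity : 0 < (4 * t)⁻¹)).const_mul
      ((4 * π * t) ^ (-(finrank ℝ E : ℝ) / 2))

variable (E) in
lemma integral_heatKernel {t : ℝ} (ht : 0 < t) : ∫ v : E, heatKernel t v = 1 := by
  simp_rw [heatKernel_eq_exp_neg_mul]
  rw [integral_const_mul, GaussianFourier.integral_rexp_neg_mul_sq_norm (by positivity),
    rpow_neg_half_mul_rpow_half ht]

variable (E) in
lemma integrable_heatKernel_mul_norm_sq {t : ℝ} (ht : 0 < t) :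
    Integrable (fun v : E => heatKernel t v * ‖v‖ ^ 2) := by
  simpa only [heatKernel_eq_exp_neg_mul, mul_assoc, mul_comm (‖_‖ ^ 2)] using
    (integrable_norm_sq_mul_exp_neg_mul_norm_sq E (by positivity : 0 < (4 * t)⁻¹)).const_mul
      ((4 * π * t) ^ (-(finrank ℝ E : ℝ) / 2))

variable (E) in
lemma integral_heatKernel_mul_norm_sq {t : ℝ} (ht : 0 < t) :
    ∫ v : E, heatKernel t v * ‖v‖ ^ 2 = 2 * t * finrank ℝ E := by
  simp_rw [heatKernel_eq_exp_neg_mul, mul_assoc, mul_comm (Real.exp _)]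
  rw [integral_const_mul, integral_norm_sq_mul_exp_neg_mul_norm_sq E (by positivity),
    mul_left_comm, ← mul_assoc 4 π t, rpow_neg_half_mul_rpow_half ht]
  field_simp
  norm_num

variable (E) in
/-- The law of a centred Gaussian vector `Z` with covariance `2 · Id`. -/
noncomputable def heatMeasure : Measure E :=
  volume.withDensity fun z => ENNReal.ofReal (heatKernel 1 z)

lemma integrable_heatMeasure_iff {φ : E → ℝ} :
    Integrable φ (heatMeasure E) ↔ Integrable fun z => heatKernel 1 z * φ z := by
  rw [heatMeasure, integrable_withDensity_iff_integrable_smul' (by fun_prop) (by simp)]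
  simp [ENNReal.toReal_ofReal (heatKernel_pos one_pos _).le]

lemma integral_heatMeasure (φ : E → ℝ) :
    ∫ z, φ z ∂heatMeasure E = ∫ z, heatKernel 1 z * φ z := by
  rw [heatMeasure, integral_withDensity_eq_integral_toReal_smul (by fun_prop) (by simp)]
  simp [ENNReal.toReal_ofReal (heatKernel_pos one_pos _).le]

instance isProbabilityMeasure_heatMeasure : IsProbabilityMeasure (heatMeasure E) := by
  refine ⟨?_⟩
  rw [heatMeasure, withDensity_apply _ .univ, Measure.restrict_univ,
    ← ofReal_integral_eq_lintegral_ofReal (integrable_heatKernel E one_pos)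
      (.of_forall fun z => (heatKernel_pos one_pos z).le),
    integral_heatKernel E one_pos, ENNReal.ofReal_one]

variable (E) in
lemma integrable_norm_sq_heatMeasure : Integrable (fun z => ‖z‖ ^ 2) (heatMeasure E) :=
  integrable_heatMeasure_iff.2 (integrable_heatKernel_mul_norm_sq E one_pos)

variable (E) in
lemma integral_norm_sq_heatMeasure : ∫ z, ‖z‖ ^ 2 ∂heatMeasure E = 2 * finrank ℝ E := by
  rw [integral_heatMeasure, integral_heatKernel_mul_norm_sq E one_pos, mul_one]

lemma map_add_smul_heatMeasure {r : ℝ} (hr : 0 < r) (y : E) :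
    (heatMeasure E).map (fun z => y + r • z) =
      volume.withDensity fun x => ENNReal.ofReal (heatKernel (r ^ 2) (x - y)) := by
  refine Measure.ext_of_lintegral _ fun h hh => ?_
  have h_smul : (volume : Measure E) =
      ENNReal.ofReal (r ^ finrank ℝ E) • volume.map (fun z => r • z) := by
    rw [Measure.map_addHaar_smul _ hr.ne', smul_smul, ← ENNReal.ofReal_mul (by positivity),
      abs_of_pos (by positivity), mul_inv_cancel₀ (by positivity), ENNReal.ofReal_one, one_smul]
  symm
  calc ∫⁻ x, h x ∂(volume.withDensity fun x => ENNReal.ofReal (heatKernel (r ^ 2) (x - y)))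
      = ∫⁻ x, ENNReal.ofReal (heatKernel (r ^ 2) (x - y)) * h x :=
        lintegral_withDensity_eq_lintegral_mul _ (by fun_prop) hh
    _ = ∫⁻ v, ENNReal.ofReal (heatKernel (r ^ 2) v) * h (y + v) := by
        rw [← lintegral_add_left_eq_self (μ := volume) _ y]
        simp only [add_sub_cancel_left]
    _ = ENNReal.ofReal (r ^ finrank ℝ E) *
          ∫⁻ z, ENNReal.ofReal (heatKernel (r ^ 2) (r • z)) * h (y + r • z) := by
        conv_lhs => rw [h_smul]
        rw [lintegral_smul_measure, lintegral_map (by fun_prop) (by fun_prop), smul_eq_mul]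
    _ = ∫⁻ z, ENNReal.ofReal (heatKernel 1 z) * h (y + r • z) := by
        rw [← lintegral_const_mul _ (by fun_prop)]
        simp_rw [← pow_finrank_mul_heatKernel_sq_smul hr, ← mul_assoc,
          ENNReal.ofReal_mul (by positivity : 0 ≤ r ^ finrank ℝ E)]
    _ = ∫⁻ x, h x ∂(heatMeasure E).map (fun z => y + r • z) := by
        rw [lintegral_map hh (by fun_prop), heatMeasure,
          lintegral_withDensity_eq_lintegral_mul _ (by fun_prop) (by fun_prop)]
        rfl

end Moments

/-! ### The heat flow of a measure -/

section HeatFlow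

variable [MeasurableSpace E]

/-- The density at `x` of the law of `Y + √t Z`, where `Y` has law `μ` and `Z` is an independent
centred Gaussian vector with covariance `2 · Id`. -/
noncomputable def heatFlow (μ : Measure E) (t : ℝ) (x : E) : ℝ :=
  ∫ y, heatKernel t (x - y) ∂μ

variable {F : Type*} [NormedAddCommGroup F] [NormedSpace ℝ F]

/-- The conditional expectation `𝔼[φ(√t Z) | Y + √t Z = x]`, where `Y` has law `μ` and `Z` is an
independent centred Gaussian vector with covariance `2 · Id`. -/
noncomputable def posteriorMean (μ : Measure E) (t : ℝ) (φ : E → F) (x : E) : F :=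
  (heatFlow μ t x)⁻¹ • ∫ y, heatKernel t (x - y) • φ (x - y) ∂μ

/-- The second moment of `μ`, which bounds how fast `log (heatFlow μ t x)` and the posterior mean of
`‖v‖ ^ 2` grow in `x`. -/
noncomputable def secondMoment (μ : Measure E) : ℝ :=
  ∫ y, ‖y‖ ^ 2 ∂μ

omit [InnerProductSpace ℝ E] in
lemma secondMoment_nonneg (μ : Measure E) : 0 ≤ secondMoment μ :=
  integral_nonneg fun _ => sq_nonneg _

variable [BorelSpace E] [FiniteDimensional ℝ E] {μ : Measure E} {t : ℝ}

section FiniteMeasure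

variable [IsFiniteMeasure μ]

lemma integrable_heatKernel_smul (ht : 0 < t) {φ : E → F} (hφ : Continuous φ) {C : ℝ}
    (hφ_le : ∀ v, ‖φ v‖ ≤ C * (1 + ‖v‖ ^ 2)) (x : E) :
    Integrable (fun y => heatKernel t (x - y) • φ (x - y)) μ := by
  have hC : 0 ≤ C := by simpa using (norm_nonneg _).trans (hφ_le 0)
  refine .of_bound (by fun_prop) (C * ((4 * π * t) ^ (-(finrank ℝ E : ℝ) / 2) * (1 + 8 * t)))
    (.of_forall fun y => ?_)
  calc ‖heatKernel t (x - y) • φ (x - y)‖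
      ≤ heatKernel t (x - y) * (C * (1 + ‖x - y‖ ^ 2)) := by
        rw [norm_smul, Real.norm_of_nonneg (heatKernel_pos ht _).le]
        gcongr
        exacts [(heatKernel_pos ht _).le, hφ_le _]
    _ = C * (heatKernel t (x - y) * (1 + ‖x - y‖ ^ 2)) := by ring
    _ ≤ _ :=
        mul_le_mul_of_nonneg_left (heatKernel_mul_one_add_norm_sq_le ht _) hC

lemma integrable_heatKernel_sub (ht : 0 < t) (x : E) :
    Integrable (fun y => heatKernel t (x - y)) μ := by
  simpa using integrable_heatKernel_smul ht (φ := fun _ => (1 : ℝ)) continuous_const (C := 1)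
    (fun v => by simp) x

lemma integrable_heatKernel_sub_mul_norm_sq (ht : 0 < t) (x : E) :
    Integrable (fun y => heatKernel t (x - y) * ‖x - y‖ ^ 2) μ :=
  integrable_heatKernel_smul ht (φ := fun v => ‖v‖ ^ 2) (by fun_prop) (C := 1)
    (fun v => by simp) x

lemma integrable_heatKernel_smul_sub (ht : 0 < t) (x : E) :
    Integrable (fun y => heatKernel t (x - y) • (x - y)) μ :=
  integrable_heatKernel_smul ht (φ := fun v => v) (by fun_prop) (C := 1)
    (fun v => by nlinarith [sq_nonneg (‖v‖ - 1)]) x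

lemma heatFlow_pos [NeZero μ] (ht : 0 < t) (x : E) : 0 < heatFlow μ t x := by
  refine (integral_pos_iff_support_of_nonneg (fun y => (heatKernel_pos ht _).le)
    (integrable_heatKernel_sub ht x)).2 ?_
  rw [Function.support_eq_univ fun y => (heatKernel_pos ht (x - y)).ne']
  exact NeZero.pos _

lemma heatFlow_smul_posteriorMean [NeZero μ] (ht : 0 < t) (φ : E → F) (x : E) :
    heatFlow μ t x • posteriorMean μ t φ x = ∫ y, heatKernel t (x - y) • φ (x - y) ∂μ :=
  smul_inv_smul₀ (heatFlow_pos ht x).ne' _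

lemma norm_posteriorMean_sq_le [NeZero μ] (ht : 0 < t) (x : E) :
    ‖posteriorMean μ t (fun v => v) x‖ ^ 2 ≤ posteriorMean μ t (fun v => ‖v‖ ^ 2) x := by
  set m := posteriorMean μ t (fun v => v) x with hm
  have h_variance : ∫ y, heatKernel t (x - y) * ‖x - y - m‖ ^ 2 ∂μ =
      heatFlow μ t x * (posteriorMean μ t (fun v => ‖v‖ ^ 2) x - ‖m‖ ^ 2) := calc
    _ = ∫ y, (heatKernel t (x - y) * ‖x - y‖ ^ 2 - 2 * ⟪m, heatKernel t (x - y) • (x - y)⟫ +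
          ‖m‖ ^ 2 * heatKernel t (x - y)) ∂μ := by
        refine integral_congr_ae (.of_forall fun y => ?_)
        simp only [norm_sub_sq_real, real_inner_smul_right, real_inner_comm m]
        ring
    _ = heatFlow μ t x * posteriorMean μ t (fun v => ‖v‖ ^ 2) x -
          2 * ⟪m, heatFlow μ t x • m⟫ + ‖m‖ ^ 2 * heatFlow μ t x := by
        have h_sq := integrable_heatKernel_sub_mul_norm_sq (μ := μ) ht x
        have h_inner := (integrable_heatKernel_smul_sub (μ := μ) ht x).const_inner (𝕜 := ℝ) m
        have h_diff : Integrable (fun y => heatKernel t (x - y) * ‖x - y‖ ^ 2 -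
            2 * ⟪m, heatKernel t (x - y) • (x - y)⟫) μ := h_sq.sub (h_inner.const_mul 2)
        rw [integral_add h_diff ((integrable_heatKernel_sub ht x).const_mul _),
          integral_sub h_sq (h_inner.const_mul 2),
          integral_const_mul, integral_const_mul,
          integral_inner (integrable_heatKernel_smul_sub ht x), hm,
          heatFlow_smul_posteriorMean ht, ← smul_eq_mul (heatFlow μ t x),
          heatFlow_smul_posteriorMean ht, heatFlow]
        rfl
    _ = _ := by
        rw [inner_smul_right, real_inner_self_eq_norm_sq]
        ring
  have h_nonneg : 0 ≤ ∫ y, heatKernel t (x - y) * ‖x - y - m‖ ^ 2 ∂μ :=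
    integral_nonneg fun y => mul_nonneg (heatKernel_pos ht _).le (sq_nonneg _)
  rw [h_variance] at h_nonneg
  linarith [nonneg_of_mul_nonneg_right h_nonneg (heatFlow_pos ht x)]

lemma abs_inner_posteriorMean_le [NeZero μ] (ht : 0 < t) (x w : E) :
    |⟪posteriorMean μ t (fun v => v) x, w⟫| ≤
      (posteriorMean μ t (fun v => ‖v‖ ^ 2) x + ‖w‖ ^ 2) / 2 := by
  have h_cauchy := abs_real_inner_le_norm (posteriorMean μ t (fun v => v) x) w
  have h_young := two_mul_le_add_sq ‖posteriorMean μ t (fun v => v) x‖ ‖w‖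
  linarith [norm_posteriorMean_sq_le (μ := μ) ht x]

end FiniteMeasure

section SecondMoment

variable [IsProbabilityMeasure μ]

lemma heatFlow_le (ht : 0 < t) (x : E) :
    heatFlow μ t x ≤ (4 * π * t) ^ (-(finrank ℝ E : ℝ) / 2) := by
  simpa [heatFlow] using integral_mono (integrable_heatKernel_sub ht x)
    (integrable_const (μ := μ) _) fun y => heatKernel_le ht (x - y)

lemma le_heatFlow (ht : 0 < t) (hμ : Integrable (fun y => ‖y‖ ^ 2) μ) (x : E) :
    (4 * π * t) ^ (-(finrank ℝ E : ℝ) / 2) * Real.exp (-(‖x‖ ^ 2 + secondMoment μ) / (2 * t)) ≤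
      heatFlow μ t x := by
  have h_le (y : E) : ‖x - y‖ ^ 2 ≤ 2 * (‖x‖ ^ 2 + ‖y‖ ^ 2) :=
    (pow_le_pow_left₀ (norm_nonneg _) (norm_sub_le x y) 2).trans (add_sq_le ..)
  have h_bound : Integrable (fun y => 2 * (‖x‖ ^ 2 + ‖y‖ ^ 2)) μ :=
    ((integrable_const _).add hμ).const_mul 2
  have h_int : Integrable (fun y => ‖x - y‖ ^ 2) μ :=
    h_bound.mono' (by fun_prop) (.of_forall fun y => by simpa using h_le y)
  have h_mean : ∫ y, ‖x - y‖ ^ 2 ∂μ ≤ 2 * (‖x‖ ^ 2 + secondMoment μ) := by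
    refine (integral_mono h_int h_bound h_le).trans_eq ?_
    rw [integral_const_mul, integral_add (integrable_const _) hμ, secondMoment]
    simp
  have h_exp_int : Integrable (fun y => Real.exp (-‖x - y‖ ^ 2 / (4 * t))) μ := by
    refine .of_bound (by fun_prop) 1 (.of_forall fun y => ?_)
    rw [Real.norm_of_nonneg (Real.exp_pos _).le, Real.exp_le_one_iff]
    exact div_nonpos_of_nonpos_of_nonneg (neg_nonpos.2 (sq_nonneg _)) (by positivity)
  simp only [heatFlow, heatKernel, integral_const_mul]
  gcongr
  calc Real.exp (-(‖x‖ ^ 2 + secondMoment μ) / (2 * t))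
      ≤ Real.exp (∫ y, -‖x - y‖ ^ 2 / (4 * t) ∂μ) := by
        rw [integral_div, integral_neg, Real.exp_le_exp, div_le_div_iff₀ (by positivity)
          (by positivity)]
        nlinarith
    _ ≤ ∫ y, Real.exp (-‖x - y‖ ^ 2 / (4 * t)) ∂μ :=
        convexOn_exp.map_integral_le continuous_exp.continuousOn isClosed_univ
          (.of_forall fun _ => mem_univ _) (h_int.neg.div_const _) h_exp_int

lemma abs_log_heatFlow_le (ht : 0 < t) (hμ : Integrable (fun y => ‖y‖ ^ 2) μ) (x : E) :
    |Real.log (heatFlow μ t x)| ≤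
      |finrank ℝ E / 2 * Real.log (4 * π * t)| + (‖x‖ ^ 2 + secondMoment μ) / (2 * t) := by
  have h_log_rpow : Real.log ((4 * π * t) ^ (-(finrank ℝ E : ℝ) / 2)) =
      -(finrank ℝ E / 2 * Real.log (4 * π * t)) := by
    rw [Real.log_rpow (by positivity)]
    ring
  have h_upper := Real.log_le_log (heatFlow_pos ht x) (heatFlow_le (μ := μ) ht x)
  have h_lower := Real.log_le_log (by positivity) (le_heatFlow ht hμ x)
  rw [Real.log_mul (by positivity) (by positivity), Real.log_exp,
    neg_div (2 * t)] at h_lower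
  rw [h_log_rpow] at h_upper h_lower
  have h_nonneg : 0 ≤ (‖x‖ ^ 2 + secondMoment μ) / (2 * t) :=
    div_nonneg (add_nonneg (sq_nonneg _) (secondMoment_nonneg μ)) (by positivity)
  rw [abs_le]
  constructor <;>
    linarith [h_nonneg, le_abs_self (finrank ℝ E / 2 * Real.log (4 * π * t)),
      neg_abs_le (finrank ℝ E / 2 * Real.log (4 * π * t))]

lemma posteriorMean_norm_sq_le (ht : 0 < t) (hμ : Integrable (fun y => ‖y‖ ^ 2) μ) (x : E) :
    posteriorMean μ t (fun v => ‖v‖ ^ 2) x ≤ 4 * (‖x‖ ^ 2 + secondMoment μ) + 8 * t := by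
  set M := 4 * (‖x‖ ^ 2 + secondMoment μ) with hM
  set c := (4 * π * t) ^ (-(finrank ℝ E : ℝ) / 2) * Real.exp (-M / (8 * t))
  have h_le : c ≤ heatFlow μ t x := by
    convert! le_heatFlow ht hμ x using 3
    rw [hM]
    field_simp
    ring
  have h_mean : heatFlow μ t x * posteriorMean μ t (fun v => ‖v‖ ^ 2) x ≤
      heatFlow μ t x * (M + 8 * t) := calc
    _ = ∫ y, heatKernel t (x - y) * ‖x - y‖ ^ 2 ∂μ := heatFlow_smul_posteriorMean ht _ x
    _ ≤ ∫ y, (M * heatKernel t (x - y) + 8 * t * c) ∂μ := by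
        refine integral_mono (integrable_heatKernel_sub_mul_norm_sq ht x)
          (((integrable_heatKernel_sub ht x).const_mul M).add (integrable_const _)) fun y => ?_
        simpa only [mul_comm (heatKernel t _)] using norm_sq_mul_heatKernel_le ht M (x - y)
    _ = M * heatFlow μ t x + 8 * t * c := by
        rw [integral_add ((integrable_heatKernel_sub ht x).const_mul M) (integrable_const _),
          integral_const_mul, heatFlow]
        simp
    _ ≤ M * heatFlow μ t x + 8 * t * heatFlow μ t x := by gcongr
    _ = heatFlow μ t x * (M + 8 * t) := by ring
  exact le_of_mul_le_mul_left h_mean (heatFlow_pos ht x)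

end SecondMoment

/-! ### Derivatives of the heat flow -/

section FiniteMeasure

variable [IsFiniteMeasure μ]

lemma integrable_heatKernel_smul_logHeatForm (ht : 0 < t) (x : E) :
    Integrable (fun y => heatKernel t (x - y) • logHeatForm t (‖x - y‖ ^ 2) (x - y)) μ :=
  integrable_heatKernel_smul ht (φ := fun v => logHeatForm t (‖v‖ ^ 2) v)
    (continuous_logHeatForm_norm_sq t) (norm_logHeatForm_le ht) x

lemma hasFDerivAt_heatFlow (ht : 0 < t) (x : E) :
    HasFDerivAt (fun q : ℝ × E => heatFlow μ q.1 q.2)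
      (∫ y, heatKernel t (x - y) • logHeatForm t (‖x - y‖ ^ 2) (x - y) ∂μ) (t, x) := by
  have h_pos {s : ℝ} (hs : s ∈ Icc (t / 2) (2 * t)) : 0 < s := (half_pos ht).trans_le hs.1
  have h_cont : ContinuousOn (fun s => (4 * π * s) ^ (-(finrank ℝ E : ℝ) / 2) * (1 + 8 * s) *
      (1 / (4 * s ^ 2) + finrank ℝ E / (2 * s) + 1 / (2 * s))) (Icc (t / 2) (2 * t)) := by
    intro s hs
    have hs_pos := h_pos hs
    refine ContinuousAt.continuousWithinAt <|
      .mul (.mul (.rpow_const (by fun_prop) (Or.inl (by positivity))) (by fun_prop)) ?_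
    fun_prop (disch := positivity)
  obtain ⟨B, hB⟩ := isCompact_Icc.exists_bound_of_continuousOn h_cont
  refine hasFDerivAt_integral_of_dominated_of_fderiv_le
    (F := fun (q : ℝ × E) y => heatKernel q.1 (q.2 - y))
    (F' := fun (q : ℝ × E) y =>
      heatKernel q.1 (q.2 - y) • logHeatForm q.1 (‖q.2 - y‖ ^ 2) (q.2 - y))
    (prod_mem_nhds (Icc_mem_nhds (half_lt_self ht) (lt_two_mul_self ht)) univ_mem)
    (.of_forall fun q => by fun_prop) (integrable_heatKernel_sub ht x)
    (integrable_heatKernel_smul_logHeatForm ht x).aestronglyMeasurable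
    (.of_forall fun y q hq => (norm_heatKernel_smul_logHeatForm_le (h_pos hq.1) _).trans
      ((le_abs_self _).trans (hB q.1 hq.1)))
    (integrable_const B) (.of_forall fun y q hq => ?_)
  obtain ⟨s, z⟩ := q
  simpa using (hasFDerivAt_comp_sub (f := fun q : ℝ × E => heatKernel q.1 q.2) (0, y)).2
    (by simpa using hasFDerivAt_heatKernel (h_pos hq.1) (z - y))

lemma posteriorMean_logHeatForm [NeZero μ] (ht : 0 < t) (x : E) :
    posteriorMean μ t (fun v => logHeatForm t (‖v‖ ^ 2) v) x =
      logHeatForm t (posteriorMean μ t (fun v => ‖v‖ ^ 2) x)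
        (posteriorMean μ t (fun v => v) x) := by
  refine ContinuousLinearMap.ext fun q => ?_
  have h_sq := (integrable_heatKernel_sub_mul_norm_sq (μ := μ) ht x).const_mul (q.1 / (4 * t ^ 2))
  have h_ker := (integrable_heatKernel_sub (μ := μ) ht x).const_mul
    (finrank ℝ E * q.1 / (2 * t))
  have h_smul := integrable_heatKernel_smul_sub (μ := μ) ht x
  have h_inner := (h_smul.const_inner (𝕜 := ℝ) q.2).const_mul (1 / (2 * t))
  have h_integral : (∫ y, heatKernel t (x - y) • logHeatForm t (‖x - y‖ ^ 2) (x - y) ∂μ) q =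
      heatFlow μ t x * logHeatForm t (posteriorMean μ t (fun v => ‖v‖ ^ 2) x)
        (posteriorMean μ t (fun v => v) x) q := calc
    _ = ∫ y, (q.1 / (4 * t ^ 2) * (heatKernel t (x - y) * ‖x - y‖ ^ 2) -
          finrank ℝ E * q.1 / (2 * t) * heatKernel t (x - y) -
          1 / (2 * t) * ⟪q.2, heatKernel t (x - y) • (x - y)⟫) ∂μ := by
        rw [ContinuousLinearMap.integral_apply (integrable_heatKernel_smul_logHeatForm ht x)]
        refine integral_congr_ae (.of_forall fun y => ?_)
        simp only [smul_apply, smul_eq_mul, logHeatForm_apply, real_inner_smul_right,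
          real_inner_comm q.2]
        ring
    _ = q.1 / (4 * t ^ 2) * (heatFlow μ t x * posteriorMean μ t (fun v => ‖v‖ ^ 2) x) -
          finrank ℝ E * q.1 / (2 * t) * heatFlow μ t x -
          1 / (2 * t) * ⟪q.2, heatFlow μ t x • posteriorMean μ t (fun v => v) x⟫ := by
        rw [integral_sub (by exact h_sq.sub h_ker) h_inner, integral_sub h_sq h_ker,
          integral_const_mul, integral_const_mul, integral_const_mul, integral_inner h_smul,
          heatFlow_smul_posteriorMean ht, ← smul_eq_mul (heatFlow μ t x),
          heatFlow_smul_posteriorMean ht, heatFlow]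
        rfl
    _ = _ := by
        rw [logHeatForm_apply, real_inner_smul_right, real_inner_comm q.2]
        ring
  rw [posteriorMean, smul_apply, h_integral, smul_eq_mul,
    inv_mul_cancel_left₀ (heatFlow_pos ht x).ne']

lemma hasFDerivAt_log_heatFlow [NeZero μ] (ht : 0 < t) (x : E) :
    HasFDerivAt (fun q : ℝ × E => Real.log (heatFlow μ q.1 q.2))
      (logHeatForm t (posteriorMean μ t (fun v => ‖v‖ ^ 2) x)
        (posteriorMean μ t (fun v => v) x)) (t, x) := by
  rw [← posteriorMean_logHeatForm ht]
  exact (hasFDerivAt_heatFlow ht x).log (heatFlow_pos ht x).ne'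

-- Tweedie's formula
lemma gradient_log_heatFlow [NeZero μ] (ht : 0 < t) (x : E) :
    gradient (fun y => Real.log (heatFlow μ t y)) x =
      -(1 / (2 * t)) • posteriorMean μ t (fun v => v) x := by
  refine HasGradientAt.gradient (hasGradientAt_iff_hasFDerivAt.2 ?_)
  refine ((hasFDerivAt_log_heatFlow ht x).comp x (hasFDerivAt_prodMk_right t x)).congr_fderiv ?_
  refine ContinuousLinearMap.ext fun w => ?_
  simp [logHeatForm_apply]

end FiniteMeasure

/-! ### The joint law of `Y` and `Y + r Z` -/

lemma map_prod_add_smul_heatMeasure {r : ℝ} (hr : 0 < r) :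
    (μ.prod (heatMeasure E)).map (fun p => (p.1, p.1 + r • p.2)) =
      (μ.prod volume).withDensity
        fun p => ENNReal.ofReal (heatKernel (r ^ 2) (p.2 - p.1)) := by
  refine Measure.ext_of_lintegral _ fun h hh => ?_
  calc ∫⁻ q, h q ∂(μ.prod (heatMeasure E)).map (fun p => (p.1, p.1 + r • p.2))
      = ∫⁻ y, ∫⁻ z, h (y, y + r • z) ∂heatMeasure E ∂μ := by
        rw [lintegral_map hh (by fun_prop), lintegral_prod _ (by fun_prop)]
    _ = ∫⁻ y, (∫⁻ x, ENNReal.ofReal (heatKernel (r ^ 2) (x - y)) * h (y, x)) ∂μ := by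
        refine lintegral_congr fun y => ?_
        rw [← lintegral_map (f := fun x => h (y, x)) (by fun_prop) (by fun_prop),
          map_add_smul_heatMeasure hr,
          lintegral_withDensity_eq_lintegral_mul _ (by fun_prop) (by fun_prop)]
        rfl
    _ = ∫⁻ q, h q ∂(μ.prod volume).withDensity
          fun p => ENNReal.ofReal (heatKernel (r ^ 2) (p.2 - p.1)) := by
        rw [lintegral_withDensity_eq_lintegral_mul _ (by fun_prop) hh,
          lintegral_prod _ (by fun_prop)]
        rfl

lemma integral_comp_prodMk_add_smul [SFinite μ] {r : ℝ} (hr : 0 < r) {Φ : E × E → ℝ}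
    (hΦ : Measurable Φ)
    (hΦ_int : Integrable (fun p => Φ (p.1, p.1 + r • p.2)) (μ.prod (heatMeasure E))) :
    ∫ p, Φ (p.1, p.1 + r • p.2) ∂μ.prod (heatMeasure E) =
      ∫ x, ∫ y, heatKernel (r ^ 2) (x - y) * Φ (y, x) ∂μ := by
  have h_density (p : E × E) : (ENNReal.ofReal (heatKernel (r ^ 2) (p.2 - p.1))).toReal =
      heatKernel (r ^ 2) (p.2 - p.1) :=
    ENNReal.toReal_ofReal (heatKernel_pos (by positivity) _).le
  have h_map : Integrable Φ ((μ.prod (heatMeasure E)).map fun p => (p.1, p.1 + r • p.2)) :=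
    (integrable_map_measure hΦ.aestronglyMeasurable (by fun_prop)).2 hΦ_int
  rw [map_prod_add_smul_heatMeasure hr,
    integrable_withDensity_iff_integrable_smul' (by fun_prop) (by simp)] at h_map
  simp only [h_density, smul_eq_mul] at h_map
  rw [← integral_map (φ := fun p : E × E => (p.1, p.1 + r • p.2)) (by fun_prop)
      hΦ.aestronglyMeasurable, map_prod_add_smul_heatMeasure hr,
    integral_withDensity_eq_integral_toReal_smul (by fun_prop) (by simp)]
  simp only [h_density, smul_eq_mul]
  exact integral_prod_symm _ h_map

lemma integral_comp_add_smul [SFinite μ] {r : ℝ} (hr : 0 < r) {G : E → ℝ} (hG : Measurable G)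
    (hG_int : Integrable (fun p => G (p.1 + r • p.2)) (μ.prod (heatMeasure E))) :
    ∫ p, G (p.1 + r • p.2) ∂μ.prod (heatMeasure E) = ∫ x, heatFlow μ (r ^ 2) x * G x := by
  rw [integral_comp_prodMk_add_smul hr (Φ := fun q => G q.2) (by fun_prop) hG_int]
  simp only [integral_mul_const, heatFlow]

lemma integral_inner_comp_add_smul {F : Type*} [NormedAddCommGroup F] [InnerProductSpace ℝ F]
    [CompleteSpace F] [MeasurableSpace F] [BorelSpace F] [SecondCountableTopology F]
    [IsFiniteMeasure μ] [NeZero μ] {r : ℝ} (hr : 0 < r) {Ψ : E → F} (hΨ : Measurable Ψ)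
    {φ : E → F} (hφ : Continuous φ) {C : ℝ} (hφ_le : ∀ v, ‖φ v‖ ≤ C * (1 + ‖v‖ ^ 2))
    (h_int : Integrable (fun p => ⟪Ψ (p.1 + r • p.2), φ (r • p.2)⟫) (μ.prod (heatMeasure E))) :
    ∫ p, ⟪Ψ (p.1 + r • p.2), φ (r • p.2)⟫ ∂μ.prod (heatMeasure E) =
      ∫ x, heatFlow μ (r ^ 2) x * ⟪Ψ x, posteriorMean μ (r ^ 2) φ x⟫ := by
  have h_joint := integral_comp_prodMk_add_smul (μ := μ) hr (Φ := fun q => ⟪Ψ q.2, φ (q.2 - q.1)⟫)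
    (by fun_prop) (by simpa using h_int)
  simp only [add_sub_cancel_left] at h_joint
  rw [h_joint]
  refine integral_congr_ae (.of_forall fun x => ?_)
  have hr_sq : 0 < r ^ 2 := by positivity
  simp only [← real_inner_smul_right, heatFlow_smul_posteriorMean hr_sq]
  exact integral_inner (integrable_heatKernel_smul hr_sq hφ hφ_le x) (Ψ x)

lemma stronglyMeasurable_heatFlow [SFinite μ] : StronglyMeasurable (heatFlow μ t) := by
  unfold heatFlow
  exact StronglyMeasurable.integral_prod_right (f := fun x y => heatKernel t (x - y))
    (by unfold Function.uncurry; fun_prop : Continuous _).stronglyMeasurable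

lemma stronglyMeasurable_posteriorMean [SFinite μ] {φ : E → F} (hφ : Continuous φ) :
    StronglyMeasurable (posteriorMean μ t φ) := by
  refine stronglyMeasurable_heatFlow.inv₀.smul ?_
  exact StronglyMeasurable.integral_prod_right
    (f := fun x y => heatKernel t (x - y) • φ (x - y))
    (by unfold Function.uncurry; fun_prop : Continuous _).stronglyMeasurable

/-! ### The Fisher information bound -/

section FisherInformation

variable [IsProbabilityMeasure μ] {r : ℝ}

omit [MeasurableSpace E] [BorelSpace E] [FiniteDimensional ℝ E] in
lemma norm_add_smul_sq_le (r : ℝ) (y z : E) :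
    ‖y + r • z‖ ^ 2 ≤ 2 * (‖y‖ ^ 2 + r ^ 2 * ‖z‖ ^ 2) := by
  have h := (pow_le_pow_left₀ (norm_nonneg _) (norm_add_le y (r • z)) 2).trans (add_sq_le ..)
  rwa [norm_smul, mul_pow, Real.norm_eq_abs, sq_abs] at h

lemma integrable_one_add_norm_sq_add_norm_sq {μ : Measure E} [IsFiniteMeasure μ]
    (hμ : Integrable (fun y => ‖y‖ ^ 2) μ) :
    Integrable (fun p : E × E => 1 + ‖p.1‖ ^ 2 + ‖p.2‖ ^ 2) (μ.prod (heatMeasure E)) :=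
  ((integrable_const 1).add (hμ.comp_fst _)).add ((integrable_norm_sq_heatMeasure E).comp_snd _)

lemma posteriorMean_norm_sq_add_smul_le (hr : 0 < r) (hμ : Integrable (fun y => ‖y‖ ^ 2) μ)
    (y z : E) :
    posteriorMean μ (r ^ 2) (fun v => ‖v‖ ^ 2) (y + r • z) ≤
      (8 + 8 * r ^ 2 + 4 * secondMoment μ) * (1 + ‖y‖ ^ 2 + ‖z‖ ^ 2) := by
  have h_cross : 0 ≤ 8 + 8 * r ^ 2 * ‖y‖ ^ 2 + 8 * ‖z‖ ^ 2 +
      4 * secondMoment μ * (‖y‖ ^ 2 + ‖z‖ ^ 2) := by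
    have := secondMoment_nonneg μ
    positivity
  calc _ ≤ 4 * (‖y + r • z‖ ^ 2 + secondMoment μ) + 8 * r ^ 2 :=
        posteriorMean_norm_sq_le (by positivity) hμ _
    _ ≤ 4 * (2 * (‖y‖ ^ 2 + r ^ 2 * ‖z‖ ^ 2) + secondMoment μ) + 8 * r ^ 2 := by
        gcongr
        exact norm_add_smul_sq_le r y z
    _ ≤ _ := by linear_combination h_cross

lemma integrable_posteriorMean_norm_sq (hr : 0 < r) (hμ : Integrable (fun y => ‖y‖ ^ 2) μ) :
    Integrable (fun p => posteriorMean μ (r ^ 2) (fun v => ‖v‖ ^ 2) (p.1 + r • p.2))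
      (μ.prod (heatMeasure E)) := by
  have h_meas : StronglyMeasurable (posteriorMean μ (r ^ 2) fun v => ‖v‖ ^ 2) :=
    stronglyMeasurable_posteriorMean (by fun_prop)
  refine ((integrable_one_add_norm_sq_add_norm_sq hμ).const_mul
    (8 + 8 * r ^ 2 + 4 * secondMoment μ)).mono'
    (h_meas.comp_measurable (by fun_prop)).aestronglyMeasurable (.of_forall fun p => ?_)
  rw [Real.norm_of_nonneg
    ((sq_nonneg _).trans (norm_posteriorMean_sq_le (by positivity) _))]
  exact posteriorMean_norm_sq_add_smul_le hr hμ p.1 p.2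

lemma integrable_norm_posteriorMean_sq (hr : 0 < r) (hμ : Integrable (fun y => ‖y‖ ^ 2) μ) :
    Integrable (fun p => ‖posteriorMean μ (r ^ 2) (fun v => v) (p.1 + r • p.2)‖ ^ 2)
      (μ.prod (heatMeasure E)) := by
  have h_meas : StronglyMeasurable (posteriorMean μ (r ^ 2) fun v => v) :=
    stronglyMeasurable_posteriorMean continuous_id
  refine (integrable_posteriorMean_norm_sq hr hμ).mono'
    ((h_meas.comp_measurable (by fun_prop)).norm.pow 2).aestronglyMeasurable
    (.of_forall fun p => ?_)
  rw [Real.norm_of_nonneg (sq_nonneg _)]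
  exact norm_posteriorMean_sq_le (by positivity) _

lemma integral_posteriorMean_norm_sq (hr : 0 < r) (hμ : Integrable (fun y => ‖y‖ ^ 2) μ) :
    ∫ p, posteriorMean μ (r ^ 2) (fun v => ‖v‖ ^ 2) (p.1 + r • p.2) ∂μ.prod (heatMeasure E) =
      2 * r ^ 2 * finrank ℝ E := by
  have h_tower := integral_inner_comp_add_smul (μ := μ) hr (Ψ := fun _ => (1 : ℝ))
    (by fun_prop) (φ := fun v => ‖v‖ ^ 2) (by fun_prop) (C := 1) (fun v => by simp) <| by
      simpa [norm_smul, mul_pow] using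
        ((integrable_norm_sq_heatMeasure E).const_mul (r ^ 2)).comp_snd μ
  simp only [Real.inner_apply, one_mul] at h_tower
  calc _ = ∫ x, heatFlow μ (r ^ 2) x * posteriorMean μ (r ^ 2) (fun v => ‖v‖ ^ 2) x :=
        integral_comp_add_smul hr (stronglyMeasurable_posteriorMean (by fun_prop)).measurable
          (integrable_posteriorMean_norm_sq hr hμ)
    _ = ∫ p, ‖r • p.2‖ ^ 2 ∂μ.prod (heatMeasure E) := h_tower.symm
    _ = r ^ 2 * ∫ z, ‖z‖ ^ 2 ∂heatMeasure E := by
        simp only [norm_smul, mul_pow, Real.norm_eq_abs, sq_abs, integral_const_mul]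
        rw [integral_fun_snd (fun z => ‖z‖ ^ 2), probReal_univ, one_smul]
    _ = 2 * r ^ 2 * finrank ℝ E := by
        rw [integral_norm_sq_heatMeasure]
        ring

lemma integral_norm_gradient_log_heatFlow_sq (hr : 0 < r)
    (hμ : Integrable (fun y => ‖y‖ ^ 2) μ) :
    ∫ x, ‖gradient (fun y => Real.log (heatFlow μ (r ^ 2) y)) x‖ ^ 2 * heatFlow μ (r ^ 2) x =
      (2 * r ^ 2)⁻¹ ^ 2 *
        ∫ p, ‖posteriorMean μ (r ^ 2) (fun v => v) (p.1 + r • p.2)‖ ^ 2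
          ∂μ.prod (heatMeasure E) := by
  have hr_sq : 0 < r ^ 2 := by positivity
  have h_meas : Measurable (posteriorMean μ (r ^ 2) fun v => v) :=
    (stronglyMeasurable_posteriorMean continuous_id).measurable
  rw [integral_comp_add_smul hr (G := fun x => ‖posteriorMean μ (r ^ 2) (fun v => v) x‖ ^ 2)
    (by fun_prop) (integrable_norm_posteriorMean_sq hr hμ), ← integral_const_mul]
  refine integral_congr_ae (.of_forall fun x => ?_)
  simp only [gradient_log_heatFlow hr_sq, norm_smul, mul_pow, norm_neg, one_div,
    Real.norm_eq_abs, sq_abs]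
  ring

theorem integral_norm_gradient_log_heatFlow_sq_le (ht : 0 < t)
    (hμ : Integrable (fun y => ‖y‖ ^ 2) μ) :
    ∫ x, ‖gradient (fun y => Real.log (heatFlow μ t y)) x‖ ^ 2 * heatFlow μ t x ≤
      finrank ℝ E / (2 * t) := by
  obtain ⟨r, hr, rfl⟩ : ∃ r, 0 < r ∧ r ^ 2 = t := ⟨√t, sqrt_pos.2 ht, sq_sqrt ht.le⟩
  have h_jensen := integral_mono (integrable_norm_posteriorMean_sq hr hμ)
    (integrable_posteriorMean_norm_sq hr hμ) fun p => norm_posteriorMean_sq_le (μ := μ) ht _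
  calc _ = (2 * r ^ 2)⁻¹ ^ 2 *
        ∫ p, ‖posteriorMean μ (r ^ 2) (fun v => v) (p.1 + r • p.2)‖ ^ 2
          ∂μ.prod (heatMeasure E) := integral_norm_gradient_log_heatFlow_sq hr hμ
    _ ≤ (2 * r ^ 2)⁻¹ ^ 2 *
        ∫ p, posteriorMean μ (r ^ 2) (fun v => ‖v‖ ^ 2) (p.1 + r • p.2)
          ∂μ.prod (heatMeasure E) := by
        gcongr
    _ = finrank ℝ E / (2 * r ^ 2) := by
        rw [integral_posteriorMean_norm_sq hr hμ]
        field_simp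

/-! ### De Bruijn's identity -/

/-- The derivative in `r` of `log u(r², y + r z)`, where `p = (y, z)` and `u` is the heat flow of
`μ`; integrating it over independent `y` and `z` differentiates the entropy. -/
noncomputable def logHeatFlowDeriv (μ : Measure E) (r : ℝ) (p : E × E) : ℝ :=
  (posteriorMean μ (r ^ 2) (fun v => ‖v‖ ^ 2) (p.1 + r • p.2) -
    ⟪posteriorMean μ (r ^ 2) (fun v => v) (p.1 + r • p.2), r • p.2⟫) / (2 * r ^ 3) -
      finrank ℝ E / r

lemma hasDerivAt_log_heatFlow_add_smul {μ : Measure E} [IsFiniteMeasure μ] [NeZero μ]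
    (hr : 0 < r) (p : E × E) :
    HasDerivAt (fun s => Real.log (heatFlow μ (s ^ 2) (p.1 + s • p.2)))
      (logHeatFlowDeriv μ r p) r := by
  have h_curve : HasDerivAt (fun s : ℝ => (s ^ 2, p.1 + s • p.2)) (2 * r, p.2) r := by
    simpa using (hasDerivAt_pow 2 r).prodMk (((hasDerivAt_id r).smul_const p.2).const_add p.1)
  convert! (hasFDerivAt_log_heatFlow (μ := μ) (by positivity : 0 < r ^ 2)
    (p.1 + r • p.2)).comp_hasDerivAt r h_curve using 1
  rw [logHeatFlowDeriv, logHeatForm_apply, real_inner_smul_right]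
  field_simp
  ring

lemma integrable_inner_posteriorMean (hr : 0 < r) (hμ : Integrable (fun y => ‖y‖ ^ 2) μ) :
    Integrable (fun p => ⟪posteriorMean μ (r ^ 2) (fun v => v) (p.1 + r • p.2), r • p.2⟫)
      (μ.prod (heatMeasure E)) := by
  have h_meas : StronglyMeasurable (posteriorMean μ (r ^ 2) fun v => v) :=
    stronglyMeasurable_posteriorMean continuous_id
  have h_sq : Integrable (fun p : E × E => ‖r • p.2‖ ^ 2) (μ.prod (heatMeasure E)) := by
    simpa [norm_smul, mul_pow] using
      ((integrable_norm_sq_heatMeasure E).const_mul (r ^ 2)).comp_snd μ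
  refine (((integrable_posteriorMean_norm_sq hr hμ).add h_sq).div_const 2).mono'
    ((h_meas.comp_measurable (by fun_prop)).inner
      (by fun_prop : Continuous fun p : E × E => r • p.2).stronglyMeasurable).aestronglyMeasurable
    (.of_forall fun p => ?_)
  exact abs_inner_posteriorMean_le (by positivity) _ _

lemma integral_inner_posteriorMean (hr : 0 < r) (hμ : Integrable (fun y => ‖y‖ ^ 2) μ) :
    ∫ p, ⟪posteriorMean μ (r ^ 2) (fun v => v) (p.1 + r • p.2), r • p.2⟫
        ∂μ.prod (heatMeasure E) =
      ∫ p, ‖posteriorMean μ (r ^ 2) (fun v => v) (p.1 + r • p.2)‖ ^ 2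
        ∂μ.prod (heatMeasure E) := by
  have h_meas : Measurable (posteriorMean μ (r ^ 2) fun v => v) :=
    (stronglyMeasurable_posteriorMean continuous_id).measurable
  rw [integral_inner_comp_add_smul hr h_meas (φ := fun v => v) continuous_id (C := 1)
      (fun v => by nlinarith [sq_nonneg (‖v‖ - 1)]) (integrable_inner_posteriorMean hr hμ),
    integral_comp_add_smul hr (G := fun x => ‖posteriorMean μ (r ^ 2) (fun v => v) x‖ ^ 2)
      (by fun_prop) (integrable_norm_posteriorMean_sq hr hμ)]
  simp only [real_inner_self_eq_norm_sq]

lemma integrable_logHeatFlowDeriv (hr : 0 < r) (hμ : Integrable (fun y => ‖y‖ ^ 2) μ) :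
    Integrable (logHeatFlowDeriv μ r) (μ.prod (heatMeasure E)) :=
  (((integrable_posteriorMean_norm_sq hr hμ).sub
    (integrable_inner_posteriorMean hr hμ)).div_const _).sub (integrable_const _)

-- The contributions of `∂ₜ log u` average to zero, as `∫ u` is constant.
lemma integral_logHeatFlowDeriv (hr : 0 < r) (hμ : Integrable (fun y => ‖y‖ ^ 2) μ) :
    ∫ p, logHeatFlowDeriv μ r p ∂μ.prod (heatMeasure E) =
      -(2 * r) * ∫ x, ‖gradient (fun y => Real.log (heatFlow μ (r ^ 2) y)) x‖ ^ 2 *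
        heatFlow μ (r ^ 2) x := by
  have h_sq := integrable_posteriorMean_norm_sq hr hμ
  have h_inner := integrable_inner_posteriorMean hr hμ
  unfold logHeatFlowDeriv
  rw [integral_sub (by exact (h_sq.sub h_inner).div_const _) (integrable_const _), integral_div,
    integral_sub h_sq h_inner, integral_posteriorMean_norm_sq hr hμ,
    integral_inner_posteriorMean hr hμ, integral_norm_gradient_log_heatFlow_sq hr hμ,
    integral_const, probReal_univ, one_smul]
  field_simp
  ring

lemma abs_logHeatFlowDeriv_le (hr : 0 < r) (hμ : Integrable (fun y => ‖y‖ ^ 2) μ) (p : E × E) :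
    |logHeatFlowDeriv μ r p| ≤
      ((2 * (8 + 8 * r ^ 2 + 4 * secondMoment μ) + r ^ 2) / (2 * r ^ 3) + finrank ℝ E / r) *
        (1 + ‖p.1‖ ^ 2 + ‖p.2‖ ^ 2) := by
  set q := 1 + ‖p.1‖ ^ 2 + ‖p.2‖ ^ 2
  set S := posteriorMean μ (r ^ 2) (fun v => ‖v‖ ^ 2) (p.1 + r • p.2)
  set m := posteriorMean μ (r ^ 2) (fun v => v) (p.1 + r • p.2)
  have hr_sq : 0 < r ^ 2 := by positivity
  have hS_nonneg : 0 ≤ S := (sq_nonneg _).trans (norm_posteriorMean_sq_le hr_sq _)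
  have hS_le : S ≤ (8 + 8 * r ^ 2 + 4 * secondMoment μ) * q :=
    posteriorMean_norm_sq_add_smul_le hr hμ p.1 p.2
  have h_inner : |⟪m, r • p.2⟫| ≤ (S + r ^ 2 * ‖p.2‖ ^ 2) / 2 := by
    simpa [norm_smul, mul_pow] using abs_inner_posteriorMean_le (μ := μ) hr_sq _ (r • p.2)
  have h_diff : |S - ⟪m, r • p.2⟫| ≤ 2 * S + r ^ 2 * ‖p.2‖ ^ 2 := by
    refine (abs_sub _ _).trans ?_
    rw [abs_of_nonneg hS_nonneg]
    linarith [mul_nonneg hr_sq.le (sq_nonneg ‖p.2‖)]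
  have h_one_le : 1 ≤ q := by nlinarith [sq_nonneg ‖p.1‖, sq_nonneg ‖p.2‖]
  have h_norm_le : ‖p.2‖ ^ 2 ≤ q := by nlinarith [sq_nonneg ‖p.1‖]
  calc |(S - ⟪m, r • p.2⟫) / (2 * r ^ 3) - finrank ℝ E / r|
      ≤ |(S - ⟪m, r • p.2⟫) / (2 * r ^ 3)| + |finrank ℝ E / r| := abs_sub _ _
    _ ≤ (2 * S + r ^ 2 * ‖p.2‖ ^ 2) / (2 * r ^ 3) + finrank ℝ E / r := by
        rw [abs_div, abs_of_pos (by positivity : 0 < 2 * r ^ 3),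
          abs_of_nonneg (by positivity : 0 ≤ finrank ℝ E / r)]
        gcongr
    _ ≤ (2 * ((8 + 8 * r ^ 2 + 4 * secondMoment μ) * q) + r ^ 2 * q) / (2 * r ^ 3) +
          finrank ℝ E / r * q := by
        gcongr
        exact le_mul_of_one_le_right (by positivity) h_one_le
    _ = _ := by ring

lemma integrable_log_heatFlow_add_smul (hr : 0 < r) (hμ : Integrable (fun y => ‖y‖ ^ 2) μ) :
    Integrable (fun p => Real.log (heatFlow μ (r ^ 2) (p.1 + r • p.2)))
      (μ.prod (heatMeasure E)) := by
  have h_meas : Measurable fun p : E × E => heatFlow μ (r ^ 2) (p.1 + r • p.2) :=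
    stronglyMeasurable_heatFlow.measurable.comp (by fun_prop)
  have h_sq : Integrable (fun p : E × E => 2 * (‖p.1‖ ^ 2 + r ^ 2 * ‖p.2‖ ^ 2))
      (μ.prod (heatMeasure E)) :=
    ((hμ.comp_fst _).add (((integrable_norm_sq_heatMeasure E).const_mul _).comp_snd _)).const_mul 2
  refine ((integrable_const |finrank ℝ E / 2 * Real.log (4 * π * r ^ 2)|).add
    ((h_sq.add (integrable_const (secondMoment μ))).div_const (2 * r ^ 2))).mono'
    h_meas.log.aestronglyMeasurable (.of_forall fun p => ?_)
  refine (abs_log_heatFlow_le (by positivity) hμ _).trans ?_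
  dsimp only [Pi.add_apply]
  gcongr
  exact norm_add_smul_sq_le r p.1 p.2

lemma hasDerivAt_integral_log_heatFlow_add_smul (hr : 0 < r)
    (hμ : Integrable (fun y => ‖y‖ ^ 2) μ) :
    HasDerivAt
      (fun s => ∫ p, Real.log (heatFlow μ (s ^ 2) (p.1 + s • p.2)) ∂μ.prod (heatMeasure E))
      (∫ p, logHeatFlowDeriv μ r p ∂μ.prod (heatMeasure E)) r := by
  have h_pos {s : ℝ} (hs : s ∈ Icc (r / 2) (2 * r)) : 0 < s := (half_pos hr).trans_le hs.1
  have h_nhds : Icc (r / 2) (2 * r) ∈ 𝓝 r := Icc_mem_nhds (half_lt_self hr) (lt_two_mul_self hr)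
  have h_cont : ContinuousOn (fun s => (2 * (8 + 8 * s ^ 2 + 4 * secondMoment μ) + s ^ 2) /
      (2 * s ^ 3) + finrank ℝ E / s) (Icc (r / 2) (2 * r)) := fun s hs =>
    have hs_pos := h_pos hs
    ContinuousAt.continuousWithinAt (by fun_prop (disch := positivity))
  obtain ⟨B, hB⟩ := isCompact_Icc.exists_bound_of_continuousOn h_cont
  refine (hasDerivAt_integral_of_dominated_loc_of_deriv_le (F' := logHeatFlowDeriv μ)
    (bound := fun p => B * (1 + ‖p.1‖ ^ 2 + ‖p.2‖ ^ 2)) h_nhds ?_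
    (integrable_log_heatFlow_add_smul hr hμ)
    (integrable_logHeatFlowDeriv hr hμ).aestronglyMeasurable
    (.of_forall fun p s hs => ?_) ((integrable_one_add_norm_sq_add_norm_sq hμ).const_mul B)
    (.of_forall fun p s hs => hasDerivAt_log_heatFlow_add_smul (h_pos hs) p)).2
  · filter_upwards [h_nhds] with s hs
    exact (integrable_log_heatFlow_add_smul (h_pos hs) hμ).aestronglyMeasurable
  · refine (abs_logHeatFlowDeriv_le (h_pos hs) hμ p).trans ?_
    gcongr
    exact (le_abs_self _).trans (hB s hs)

theorem hasDerivAt_neg_integral_heatFlow_mul_log (ht : 0 < t)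
    (hμ : Integrable (fun y => ‖y‖ ^ 2) μ) :
    HasDerivAt (fun s => -∫ x, heatFlow μ s x * Real.log (heatFlow μ s x))
      (∫ x, ‖gradient (fun y => Real.log (heatFlow μ t y)) x‖ ^ 2 * heatFlow μ t x) t := by
  have h_sqrt := sqrt_pos.2 ht
  have h_deriv := hasDerivAt_integral_log_heatFlow_add_smul h_sqrt hμ
  rw [integral_logHeatFlowDeriv h_sqrt hμ, sq_sqrt ht.le] at h_deriv
  refine ((h_deriv.comp t (hasDerivAt_sqrt ht.ne')).neg.congr_of_eventuallyEq ?_).congr_deriv ?_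
  · filter_upwards [Ioi_mem_nhds ht] with s hs
    have h_log : Measurable fun x => Real.log (heatFlow μ (√s ^ 2) x) :=
      stronglyMeasurable_heatFlow.measurable.log
    have hs_sqrt : 0 < √s := sqrt_pos.2 hs
    simp only [Pi.neg_apply, Function.comp_apply]
    rw [integral_comp_add_smul hs_sqrt h_log (integrable_log_heatFlow_add_smul hs_sqrt hμ),
      sq_sqrt (mem_Ioi.1 hs).le]
  · field_simp

end FisherInformation

end HeatFlow

/-! ### Initial probability densities on `ℝⁿ` -/

section InitialMeasure

variable {X : Type*} [MeasureSpace X] {f : X → ℝ}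

/-- The measure with density `f`; its heat flow is the heat semigroup solution started at `f`. -/
noncomputable def initialMeasure (f : X → ℝ) : Measure X :=
  volume.withDensity fun y => ENNReal.ofReal (f y)

lemma isProbabilityMeasure_initialMeasure (hf_nonneg : ∀ x, 0 ≤ f x) (hf_int : ∫ x, f x = 1) :
    IsProbabilityMeasure (initialMeasure f) := by
  have hf : Integrable f := .of_integral_ne_zero (by simp [hf_int])
  refine ⟨?_⟩
  rw [initialMeasure, withDensity_apply _ .univ, Measure.restrict_univ,
    ← ofReal_integral_eq_lintegral_ofReal hf (.of_forall hf_nonneg), hf_int, ENNReal.ofReal_one]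

lemma integrable_initialMeasure_iff (hf : AEMeasurable f) (hf_nonneg : ∀ x, 0 ≤ f x)
    {g : X → ℝ} : Integrable g (initialMeasure f) ↔ Integrable fun x => g x * f x := by
  rw [initialMeasure, integrable_withDensity_iff_integrable_smul₀' hf.ennreal_ofReal (by simp)]
  simp only [ENNReal.toReal_ofReal (hf_nonneg _), smul_eq_mul, mul_comm (f _)]

lemma integral_initialMeasure (hf : AEMeasurable f) (hf_nonneg : ∀ x, 0 ≤ f x) (g : X → ℝ) :
    ∫ x, g x ∂initialMeasure f = ∫ x, g x * f x := by
  rw [initialMeasure,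
    integral_withDensity_eq_integral_toReal_smul₀ hf.ennreal_ofReal (by simp)]
  simp only [ENNReal.toReal_ofReal (hf_nonneg _), smul_eq_mul, mul_comm (f _)]

end InitialMeasure

section EuclideanSpace

variable {n : ℕ} {f : EuclideanSpace ℝ (Fin n) → ℝ} {t : ℝ}

lemma heatSol_nonneg (ht : 0 ≤ t) (hf_nonneg : ∀ x, 0 ≤ f x) (x : EuclideanSpace ℝ (Fin n)) :
    0 ≤ heatSol n f t x :=
  integral_nonneg fun y => mul_nonneg (by positivity) (hf_nonneg y)

lemma fisherInfo_nonneg (ht : 0 ≤ t) (hf_nonneg : ∀ x, 0 ≤ f x) : 0 ≤ fisherInfo n f t :=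
  integral_nonneg fun x => mul_nonneg (sq_nonneg _) (heatSol_nonneg ht hf_nonneg x)

lemma heatSol_eq_heatFlow (hf : AEMeasurable f) (hf_nonneg : ∀ x, 0 ≤ f x) :
    heatSol n f = heatFlow (initialMeasure f) := by
  funext t x
  rw [heatFlow, integral_initialMeasure hf hf_nonneg, heatSol]
  simp only [heatKernel, finrank_euclideanSpace_fin]

lemma fisherInfo_le (ht : 0 < t) (hf_nonneg : ∀ x, 0 ≤ f x)
    (hf_mom : Integrable fun x => ‖x‖ ^ 2 * f x) (hf_int : ∫ x, f x = 1) :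
    fisherInfo n f t ≤ n / (2 * t) := by
  have hf : Integrable f := .of_integral_ne_zero (by simp [hf_int])
  have := isProbabilityMeasure_initialMeasure hf_nonneg hf_int
  simpa only [fisherInfo, heatSol_eq_heatFlow hf.aemeasurable hf_nonneg,
    finrank_euclideanSpace_fin] using integral_norm_gradient_log_heatFlow_sq_le ht
      ((integrable_initialMeasure_iff hf.aemeasurable hf_nonneg).2 hf_mom)

lemma hasDerivAt_shannonEntropy (ht : 0 < t) (hf_nonneg : ∀ x, 0 ≤ f x)
    (hf_mom : Integrable fun x => ‖x‖ ^ 2 * f x) (hf_int : ∫ x, f x = 1) :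
    HasDerivAt (shannonEntropy n f) (fisherInfo n f t) t := by
  have hf : Integrable f := .of_integral_ne_zero (by simp [hf_int])
  have := isProbabilityMeasure_initialMeasure hf_nonneg hf_int
  unfold shannonEntropy fisherInfo
  simpa only [heatSol_eq_heatFlow hf.aemeasurable hf_nonneg] using
    hasDerivAt_neg_integral_heatFlow_mul_log ht
      ((integrable_initialMeasure_iff hf.aemeasurable hf_nonneg).2 hf_mom)

end EuclideanSpace

theorem fisher_info_le_general (n : ℕ) (f : EuclideanSpace ℝ (Fin n) → ℝ)
    (hf_nonneg : ∀ x, 0 ≤ f x) (hf_mom : Integrable fun x => ‖x‖ ^ 2 * f x)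
    (hf_int : ∫ x, f x = 1) :
    (∀ t : ℝ, 0 < t → fisherInfo n f t ≤ (n : ℝ) / (2 * t)) ∧
    (∀ t : ℝ, 0 < t → t * deriv (shannonEntropy n f) t ≤ (n : ℝ) / 2) ∧
    limsup (fun t => t * deriv (shannonEntropy n f) t) (𝓝[>] 0) ≤ (n : ℝ) / 2 := by
  have h_fisher (t : ℝ) (ht : 0 < t) : fisherInfo n f t ≤ n / (2 * t) :=
    fisherInfo_le ht hf_nonneg hf_mom hf_int
  have h_deBruijn {t : ℝ} (ht : 0 < t) : deriv (shannonEntropy n f) t = fisherInfo n f t :=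
    (hasDerivAt_shannonEntropy ht hf_nonneg hf_mom hf_int).deriv
  have h_slope (t : ℝ) (ht : 0 < t) : t * deriv (shannonEntropy n f) t ≤ n / 2 := by
    rw [h_deBruijn ht]
    calc t * fisherInfo n f t ≤ t * (n / (2 * t)) := by gcongr; exact h_fisher t ht
      _ = n / 2 := by field_simp
  have h_slope_nonneg (t : ℝ) (ht : 0 < t) : 0 ≤ t * deriv (shannonEntropy n f) t := by
    rw [h_deBruijn ht]
    exact mul_nonneg ht.le (fisherInfo_nonneg ht.le hf_nonneg)
  exact ⟨h_fisher, h_slope, limsup_le_of_le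
    (isCoboundedUnder_le_of_eventually_le _ (eventually_mem_nhdsWithin.mono h_slope_nonneg))
    (eventually_mem_nhdsWithin.mono h_slope)⟩

/-- Fisher information bound from the Li–Yau Harnack inequality: `I(u(t)) ≤ n/(2t)`,
hence `t·H'(u(t)) ≤ n/2` and `limsup_{t→0⁺} t·H'(u(t)) ≤ n/2`. -/
theorem fisher_info_le (n : ℕ) (hn : 1 ≤ n)
    (f : EuclideanSpace ℝ (Fin n) → ℝ)
    (hf_cont : Continuous f) (hf_nonneg : ∀ x, 0 ≤ f x)
    (hf_supp : HasCompactSupport f)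
    (hf_int : ∫ x, f x = 1) :
    (∀ t : ℝ, 0 < t → fisherInfo n f t ≤ (n : ℝ) / (2 * t)) ∧
    (∀ t : ℝ, 0 < t → t * deriv (shannonEntropy n f) t ≤ (n : ℝ) / 2) ∧
    Filter.limsup (fun t => t * deriv (shannonEntropy n f) t)
      (nhdsWithin 0 (Set.Ioi 0)) ≤ (n : ℝ) / 2 :=
  fisher_info_le_general n f hf_nonneg ((by fun_prop : Continuous
    fun x => ‖x‖ ^ 2 * f x).integrable_of_hasCompactSupport hf_supp.mul_left) hf_int
end

section
/- Let n ≥ 1 and let f : ℝⁿ → ℝ be a smooth, strictly positive probability density (∫_{ℝⁿ} f dx = 1) such that f log f and |∇f|²/f are integrable. Then the entropy isoperimetric inequality I(f) N(f) ≥ 2πen holds, where I(f) = ∫_{ℝⁿ} |∇f|²/f dx is the Fisher information and N(f) = exp((2/n)(-∫_{ℝⁿ} f log f dx)) is the Shannon entropy power. Equivalently, ∫_{ℝⁿ} f log f dx ≤ (n/2) log((1/(2πen)) ∫_{ℝⁿ} |∇f|²/f dx). -/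
open Real MeasureTheory

/-!
On the line, let `T` be the monotone transport of `f` to the Gaussian `γ` of variance `v` with the
same mass, so that `f = γ(T) T'`. Then `log f = log γ(T) + log T'` with `log T' ≤ T' - 1`, and
completing a square gives `f log f ≤ (f T)' + (v / 2) f'² / f + const · f`. Since `f T` is the
derivative of the bounded function `-v γ(T)`, its boundary terms vanish along suitable sequences,
so the logarithmic Sobolev inequality with parameter `v` follows without any decay assumption.

It passes to products because entropy is subadditive (Gibbs' inequality against the product of the
marginals): one applies it to the slices of `f` in each factor, and no derivative of a marginal is
ever taken. On a Euclidean space of dimension `n`, the choice `v = n / I(f)` is optimal.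
-/

section Transport

open Set Filter Topology

variable {F G : ℝ → ℝ}

theorem hasDerivAt_integral_Iic (hF : Continuous F) (hFi : Integrable F) (x : ℝ) :
    HasDerivAt (fun t => ∫ s in Iic t, F s) (F x) x := by
  have split (t : ℝ) : ∫ s in Iic t, F s = (∫ s in Iic 0, F s) + ∫ s in (0 : ℝ)..t, F s := by
    rw [← intervalIntegral.integral_Iic_sub_Iic hFi.integrableOn hFi.integrableOn,
      add_sub_cancel]
  exact ((hF.integral_hasStrictDerivAt 0 x).hasDerivAt.const_add _).congr_of_eventuallyEq
    (.of_forall split)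

theorem strictMono_integral_Iic (hF : Continuous F) (hF_pos : ∀ x, 0 < F x)
    (hFi : Integrable F) : StrictMono fun t => ∫ s in Iic t, F s :=
  strictMono_of_hasDerivAt_pos (hasDerivAt_integral_Iic hF hFi) hF_pos

theorem range_integral_Iic (hF : Continuous F) (hF_pos : ∀ x, 0 < F x) (hFi : Integrable F) :
    range (fun t => ∫ s in Iic t, F s) = Ioo 0 (∫ s, F s) := by
  set U : ℝ → ℝ := fun t => ∫ s in Iic t, F s
  have mono : StrictMono U := strictMono_integral_Iic hF hF_pos hFi
  have cont : Continuous U :=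
    continuous_iff_continuousAt.2 fun x => (hasDerivAt_integral_Iic hF hFi x).continuousAt
  have lim_bot : Tendsto U atBot (𝓝 0) := tendsto_integral_Iic_zero tendsto_id
  have lim_top : Tendsto U atTop (𝓝 (∫ s, F s)) :=
    (aecover_Iic tendsto_id).integral_tendsto_of_countably_generated hFi
  apply Subset.antisymm
  · rintro _ ⟨x, rfl⟩
    exact ⟨(mono.monotone.le_of_tendsto lim_bot (x - 1)).trans_lt (mono (sub_one_lt x)),
      (mono (lt_add_one x)).trans_le (mono.monotone.ge_of_tendsto lim_top (x + 1))⟩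
  · rintro u ⟨hu_pos, hu_lt⟩
    obtain ⟨a, ha⟩ := (lim_bot.eventually_lt_const hu_pos).exists
    obtain ⟨b, hb⟩ := (lim_top.eventually_const_lt hu_lt).exists
    exact mem_range_of_exists_le_of_exists_ge cont ⟨a, ha.le⟩ ⟨b, hb.le⟩

theorem exists_hasDerivAt_transport (hF : Continuous F) (hF_pos : ∀ x, 0 < F x)
    (hFi : Integrable F) (hG : Continuous G) (hG_pos : ∀ x, 0 < G x) (hGi : Integrable G)
    (h_mass : ∫ x, F x = ∫ x, G x) :
    ∃ T : ℝ → ℝ, ∀ x, HasDerivAt T (F x / G (T x)) x := by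
  set U : ℝ → ℝ := fun t => ∫ s in Iic t, F s
  set V : ℝ → ℝ := fun t => ∫ s in Iic t, G s
  have left_inv : Function.LeftInverse (Function.invFun V) V :=
    Function.leftInverse_invFun (strictMono_integral_Iic hG hG_pos hGi).injective
  refine ⟨Function.invFun V ∘ U, fun x => ?_⟩
  obtain ⟨z, hz⟩ : U x ∈ range V := by
    rw [range_integral_Iic hG hG_pos hGi, ← h_mass, ← range_integral_Iic hF hF_pos hFi]
    exact mem_range_self x
  have V_deriv : HasStrictDerivAt V (G z) z :=
    hasStrictDerivAt_of_hasDerivAt_of_continuousAt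
      (.of_forall (hasDerivAt_integral_Iic hG hGi)) hG.continuousAt
  have inv_deriv : HasDerivAt (Function.invFun V) (G z)⁻¹ (U x) := hz ▸
    (V_deriv.to_local_left_inverse (hG_pos z).ne' (.of_forall left_inv)).hasDerivAt
  have Tx : (Function.invFun V ∘ U) x = z := by
    rw [Function.comp_apply, ← hz, left_inv z]
  rw [Tx, div_eq_inv_mul]
  exact inv_deriv.comp x (hasDerivAt_integral_Iic hF hFi x)

end Transport

section BoundedAntiderivative

open Set Filter Topology

variable {V W w g : ℝ → ℝ} {C ε : ℝ}

theorem frequently_atTop_le_of_bounded_antideriv (hV : ∀ x, HasDerivAt V (W x) x)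
    (hVC : ∀ x, |V x| ≤ C) (hε : 0 < ε) : ∃ᶠ x in atTop, W x ≤ ε := by
  rw [frequently_atTop]
  intro A
  by_contra! h_large
  have hAB : A < A + (2 * C + 1) / ε := by
    have := (abs_nonneg _).trans (hVC 0)
    exact lt_add_of_pos_right A (by positivity)
  obtain ⟨c, hc, slope⟩ := exists_hasDerivAt_eq_slope V W hAB
    (HasDerivAt.continuousOn fun x _ => hV x) fun x _ => hV x
  have large := h_large c hc.1.le
  rw [slope, add_sub_cancel_left, lt_div_iff₀ (by linarith), mul_div_cancel₀ _ hε.ne'] at large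
  linarith [abs_le.1 (hVC A), abs_le.1 (hVC (A + (2 * C + 1) / ε))]

theorem frequently_atBot_ge_of_bounded_antideriv (hV : ∀ x, HasDerivAt V (W x) x)
    (hVC : ∀ x, |V x| ≤ C) (hε : 0 < ε) : ∃ᶠ x in atBot, -ε ≤ W x := by
  have reflected : ∃ᶠ x in atTop, -W (-x) ≤ ε :=
    frequently_atTop_le_of_bounded_antideriv (V := fun x => V (-x))
      (fun x => ((hV (-x)).comp x (hasDerivAt_neg x)).congr_deriv (by ring))
      (fun x => hVC (-x)) hε
  exact (tendsto_neg_atTop_atBot.frequently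
    (reflected.mono fun x hx => (neg_le.1 hx : -ε ≤ W (-x))))

-- A derivative `W` with a bounded antiderivative cannot stay away from `0` near either end, so the
-- boundary terms of `∫ W'` are small along suitable sequences.
theorem integral_nonpos_of_le_deriv_of_bounded_antideriv (hV : ∀ x, HasDerivAt V (W x) x)
    (hVC : ∀ x, |V x| ≤ C) (hW : ∀ x, HasDerivAt W (w x) x) (hg : Integrable g)
    (hgw : ∀ x, g x ≤ w x) : ∫ x, g x ≤ 0 := by
  by_contra! h_pos
  set δ := ∫ x, g x
  have lim : Tendsto (fun p : ℝ × ℝ => ∫ x in p.1..p.2, g x) (atBot ×ˢ atTop) (𝓝 δ) :=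
    intervalIntegral_tendsto_integral hg tendsto_fst tendsto_snd
  have large : ∀ᶠ a in atBot, ∀ᶠ b in atTop, δ / 2 < ∫ x in a..b, g x :=
    (lim.eventually_const_lt (half_lt_self h_pos)).curry
  obtain ⟨a, ha, large_a⟩ := ((frequently_atBot_ge_of_bounded_antideriv hV hVC
    (by positivity : 0 < δ / 4)).and_eventually large).exists
  obtain ⟨b, hb, large_ab, hab⟩ := ((frequently_atTop_le_of_bounded_antideriv hV hVC
    (by positivity : 0 < δ / 4)).and_eventually (large_a.and (eventually_ge_atTop a))).exists
  have ftc : ∫ x in a..b, g x ≤ W b - W a :=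
    intervalIntegral.integral_le_sub_of_hasDeriv_right_of_le hab
      (HasDerivAt.continuousOn fun x _ => hW x) (fun x _ => (hW x).hasDerivWithinAt)
      hg.integrableOn fun x _ => hgw x
  linarith

end BoundedAntiderivative

section Gaussian

open ProbabilityTheory NNReal

variable {v : ℝ≥0}

theorem continuous_gaussianPDFReal (μ : ℝ) (v : ℝ≥0) : Continuous (gaussianPDFReal μ v) := by
  rw [gaussianPDFReal_def]
  fun_prop

theorem hasDerivAt_gaussianPDFReal_zero (v : ℝ≥0) (z : ℝ) :
    HasDerivAt (gaussianPDFReal 0 v) (-(z / v) * gaussianPDFReal 0 v z) z := by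
  rw [gaussianPDFReal_def]
  have := (((hasDerivAt_pow 2 z).fun_neg.div_const (2 * (v : ℝ))).exp).const_mul (√(2 * π * v))⁻¹
  simp only [sub_zero]
  refine this.congr_deriv ?_
  push_cast
  ring

theorem gaussianPDFReal_le (μ : ℝ) (v : ℝ≥0) (z : ℝ) :
    gaussianPDFReal μ v z ≤ (√(2 * π * v))⁻¹ := by
  refine mul_le_of_le_one_right (by positivity) (exp_le_one_iff.2 ?_)
  exact div_nonpos_of_nonpos_of_nonneg (neg_nonpos.2 (sq_nonneg _)) (by positivity)

theorem log_gaussianPDFReal (μ : ℝ) (hv : v ≠ 0) (z : ℝ) :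
    log (gaussianPDFReal μ v z) = -(log (2 * π * v) / 2) - (z - μ) ^ 2 / (2 * v) := by
  rw [gaussianPDFReal, log_mul (by positivity) (by positivity), log_inv,
    log_sqrt (by positivity), log_exp]
  ring

end Gaussian

section Subadditivity

open Set

variable {X Y : Type*} [MeasurableSpace X] [MeasurableSpace Y] {μ : Measure X} {ν : Measure Y}

theorem integral_pos_of_forall_pos [NeZero μ] {f : X → ℝ} (hf_pos : ∀ x, 0 < f x)
    (hf : Integrable f μ) : 0 < ∫ x, f x ∂μ := by
  rw [integral_pos_iff_support_of_nonneg (fun x => (hf_pos x).le) hf,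
    Function.support_eq_univ fun x => (hf_pos x).ne']
  exact pos_iff_ne_zero.2 (NeZero.ne' (μ univ)).symm

instance neZero_prod [SFinite ν] [NeZero μ] [NeZero ν] : NeZero (μ.prod ν) :=
  ⟨by rw [← Measure.measure_univ_ne_zero, ← univ_prod_univ, Measure.prod_prod]
      exact mul_ne_zero (NeZero.ne _) (NeZero.ne _)⟩

theorem mul_log_add_mul_log_le {p a b m : ℝ} (hp : 0 < p) (ha : 0 < a) (hb : 0 < b)
    (hm : 0 < m) :
    p * log a + p * log b ≤ p * log p + p * log m + (a * b / m - p) := by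
  have h_log : log (a * b / (m * p)) ≤ a * b / (m * p) - 1 := log_le_sub_one_of_pos (by positivity)
  rw [log_div (by positivity) (by positivity), log_mul ha.ne' hb.ne', log_mul hm.ne' hp.ne']
    at h_log
  have scaled := mul_le_mul_of_nonneg_left h_log hp.le
  have cancel : p * (a * b / (m * p) - 1) = a * b / m - p := by field_simp
  linarith

theorem integrable_mul_negPart_log {F g : X → ℝ} (hF : Integrable F μ)
    (hF_pos : ∀ᵐ x ∂μ, 0 < F x) (hg : Integrable g μ)
    (hgF : ∀ᵐ x ∂μ, g x ≤ F x * log (F x)) : Integrable (fun x => F x * (log (F x))⁻) μ := by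
  have meas : AEStronglyMeasurable (fun x => F x * (log (F x))⁻) μ :=
    hF.1.mul (hF.1.aemeasurable.log.neg.sup_const 0).aestronglyMeasurable
  refine hg.abs.mono' meas ?_
  filter_upwards [hF_pos, hgF] with x hx hgx
  rw [norm_of_nonneg (mul_nonneg hx.le (negPart_nonneg _)), negPart_def,
    mul_max_of_nonneg _ _ hx.le, mul_zero, mul_neg]
  exact max_le (neg_le.2 ((neg_abs_le _).trans hgx)) (abs_nonneg _)

variable [SFinite μ] [SFinite ν] {f : X × Y → ℝ}

theorem integrable_mul_comp_fst (hf : Integrable f (μ.prod ν)) (hf_nonneg : ∀ z, 0 ≤ f z)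
    {k : X → ℝ} (hk : AEStronglyMeasurable k μ)
    (hfk : Integrable (fun x => (∫ y, f (x, y) ∂ν) * k x) μ) :
    Integrable (fun z => f z * k z.1) (μ.prod ν) := by
  have meas : AEStronglyMeasurable (fun z => f z * k z.1) (μ.prod ν) := hf.1.mul hk.comp_fst
  have norm_slice (x : X) : ∫ y, ‖f (x, y) * k x‖ ∂ν = ‖(∫ y, f (x, y) ∂ν) * k x‖ := by
    simp only [norm_mul, integral_mul_const, norm_of_nonneg (hf_nonneg _),
      norm_of_nonneg (integral_nonneg fun y => hf_nonneg (x, y))]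
  refine (integrable_prod_iff meas).2 ⟨hf.prod_right_ae.mono fun x hx => hx.mul_const (k x), ?_⟩
  simp only [norm_slice]
  exact hfk.norm

theorem integrable_mul_comp_snd (hf : Integrable f (μ.prod ν)) (hf_nonneg : ∀ z, 0 ≤ f z)
    {k : Y → ℝ} (hk : AEStronglyMeasurable k ν)
    (hfk : Integrable (fun y => (∫ x, f (x, y) ∂μ) * k y) ν) :
    Integrable (fun z => f z * k z.2) (μ.prod ν) :=
  (integrable_mul_comp_fst hf.swap (fun z => hf_nonneg z.swap) hk hfk).swap

theorem ae_integral_slice_pos [NeZero ν] (hf : Integrable f (μ.prod ν)) (hf_pos : ∀ z, 0 < f z) :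
    ∀ᵐ x ∂μ, 0 < ∫ y, f (x, y) ∂ν :=
  hf.prod_right_ae.mono fun x hx => integral_pos_of_forall_pos (fun y => hf_pos (x, y)) hx

theorem ae_mul_log_marginals_le [NeZero μ] [NeZero ν] (hf : Integrable f (μ.prod ν))
    (hf_pos : ∀ z, 0 < f z) {m : ℝ} (hm : 0 < m) :
    ∀ᵐ z ∂μ.prod ν, f z * log (∫ y, f (z.1, y) ∂ν) + f z * log (∫ x, f (x, z.2) ∂μ) ≤
      f z * log (f z) + f z * log m +
        ((∫ y, f (z.1, y) ∂ν) * (∫ x, f (x, z.2) ∂μ) / m - f z) := by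
  filter_upwards [Measure.quasiMeasurePreserving_fst.ae (ae_integral_slice_pos hf hf_pos),
    Measure.quasiMeasurePreserving_snd.ae
      (ae_integral_slice_pos hf.swap fun z => hf_pos z.swap)] with z h_fst h_snd
  exact mul_log_add_mul_log_le (hf_pos z) h_fst h_snd hm

-- Gibbs' inequality bounds `f log p` above, up to the negative part of `f log q`; the negative
-- parts are integrable because of the lower bounds `g` and `h`.
theorem integrable_mul_log_marginal [NeZero μ] [NeZero ν] (hf : Integrable f (μ.prod ν))
    (hf_pos : ∀ z, 0 < f z) (h_ent : Integrable (fun z => f z * log (f z)) (μ.prod ν))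
    {g : X → ℝ} (hg : Integrable g μ)
    (hgf : ∀ᵐ x ∂μ, g x ≤ (∫ y, f (x, y) ∂ν) * log (∫ y, f (x, y) ∂ν))
    {h : Y → ℝ} (hh : Integrable h ν)
    (hhf : ∀ᵐ y ∂ν, h y ≤ (∫ x, f (x, y) ∂μ) * log (∫ x, f (x, y) ∂μ)) :
    Integrable (fun z => f z * log (∫ y, f (z.1, y) ∂ν)) (μ.prod ν) := by
  set p : X → ℝ := fun x => ∫ y, f (x, y) ∂ν
  set q : Y → ℝ := fun y => ∫ x, f (x, y) ∂μ
  have hf_nonneg (z) : 0 ≤ f z := (hf_pos z).le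
  have hp : Integrable p μ := hf.integral_prod_left
  have hq : Integrable q ν := hf.integral_prod_right
  have log_p_meas : AEMeasurable (fun x => log (p x)) μ := hp.1.aemeasurable.log
  have log_q_meas : AEMeasurable (fun y => log (q y)) ν := hq.1.aemeasurable.log
  have neg_p : Integrable (fun z => f z * (log (p z.1))⁻) (μ.prod ν) :=
    integrable_mul_comp_fst hf hf_nonneg (log_p_meas.neg.sup_const 0).aestronglyMeasurable
      (integrable_mul_negPart_log hp (ae_integral_slice_pos hf hf_pos) hg hgf)
  have neg_q : Integrable (fun z => f z * (log (q z.2))⁻) (μ.prod ν) :=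
    integrable_mul_comp_snd hf hf_nonneg (log_q_meas.neg.sup_const 0).aestronglyMeasurable
      (integrable_mul_negPart_log hq
        (ae_integral_slice_pos hf.swap fun z => hf_pos z.swap) hh hhf)
  have upper : Integrable (fun z => f z * log (f z) + p z.1 * q z.2 + f z * (log (q z.2))⁻)
      (μ.prod ν) := (h_ent.add (hp.mul_prod hq)).add neg_q
  have log_ge {z : X × Y} (t : ℝ) : -(f z * t⁻) ≤ f z * t := by
    rw [← mul_neg]
    exact mul_le_mul_of_nonneg_left (neg_le.1 (neg_le_negPart t)) (hf_nonneg z)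
  refine integrable_of_le_of_le (hf.1.mul log_p_meas.aestronglyMeasurable.comp_fst)
    (.of_forall fun z => log_ge (log (p z.1))) ?_ neg_p.neg upper
  filter_upwards [ae_mul_log_marginals_le hf hf_pos one_pos] with z gibbs
  rw [log_one, mul_zero, add_zero, div_one] at gibbs
  linarith [hf_pos z, log_ge (z := z) (log (q z.2))]

theorem integral_mul_log_marginals_le [NeZero μ] [NeZero ν] (hf : Integrable f (μ.prod ν))
    (hf_pos : ∀ z, 0 < f z) (h_ent : Integrable (fun z => f z * log (f z)) (μ.prod ν))
    (h_fst : Integrable (fun z => f z * log (∫ y, f (z.1, y) ∂ν)) (μ.prod ν))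
    (h_snd : Integrable (fun z => f z * log (∫ x, f (x, z.2) ∂μ)) (μ.prod ν)) :
    ∫ x, (∫ y, f (x, y) ∂ν) * log (∫ y, f (x, y) ∂ν) ∂μ +
        ∫ y, (∫ x, f (x, y) ∂μ) * log (∫ x, f (x, y) ∂μ) ∂ν ≤
      ∫ z, f z * log (f z) ∂μ.prod ν +
        (∫ z, f z ∂μ.prod ν) * log (∫ z, f z ∂μ.prod ν) := by
  set p : X → ℝ := fun x => ∫ y, f (x, y) ∂ν
  set q : Y → ℝ := fun y => ∫ x, f (x, y) ∂μ
  set m := ∫ z, f z ∂μ.prod ν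
  have m_pos : 0 < m := integral_pos_of_forall_pos hf_pos hf
  have p_mass : ∫ x, p x ∂μ = m := (integral_prod f hf).symm
  have q_mass : ∫ y, q y ∂ν = m := (integral_prod_symm f hf).symm
  have pq_int : Integrable (fun z : X × Y => p z.1 * q z.2 / m) (μ.prod ν) :=
    (hf.integral_prod_left.mul_prod hf.integral_prod_right).div_const m
  have pq_mass : ∫ z, p z.1 * q z.2 / m ∂μ.prod ν = m := by
    rw [integral_div, integral_prod_mul, p_mass, q_mass, mul_div_cancel_right₀ _ m_pos.ne']
  have fst_eq : ∫ z, f z * log (p z.1) ∂μ.prod ν = ∫ x, p x * log (p x) ∂μ := by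
    rw [integral_prod _ h_fst]
    simp only [integral_mul_const, p]
  have snd_eq : ∫ z, f z * log (q z.2) ∂μ.prod ν = ∫ y, q y * log (q y) ∂ν := by
    rw [integral_prod_symm _ h_snd]
    simp only [integral_mul_const, q]
  have cross_int : Integrable (fun z => f z * log (f z) + f z * log m) (μ.prod ν) :=
    h_ent.add (hf.mul_const _)
  have defect_int : Integrable (fun z => p z.1 * q z.2 / m - f z) (μ.prod ν) := pq_int.sub hf
  calc ∫ x, p x * log (p x) ∂μ + ∫ y, q y * log (q y) ∂ν
      = ∫ z, f z * log (p z.1) + f z * log (q z.2) ∂μ.prod ν := by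
        rw [integral_add h_fst h_snd, fst_eq, snd_eq]
    _ ≤ ∫ z, f z * log (f z) + f z * log m + (p z.1 * q z.2 / m - f z) ∂μ.prod ν :=
        integral_mono_ae (h_fst.add h_snd) (cross_int.add defect_int)
          (ae_mul_log_marginals_le hf hf_pos m_pos)
    _ = ∫ z, f z * log (f z) ∂μ.prod ν + m * log m := by
        rw [integral_add cross_int defect_int,
          integral_add h_ent (hf.mul_const _), integral_sub pq_int hf, pq_mass,
          integral_mul_const, sub_self, add_zero]

theorem integral_mul_log_le_of_slices [NeZero μ] [NeZero ν] (hf : Integrable f (μ.prod ν))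
    (hf_pos : ∀ z, 0 < f z) (h_ent : Integrable (fun z => f z * log (f z)) (μ.prod ν))
    {R : X → ℝ} (hR : Integrable R μ)
    (h_right : ∀ᵐ x ∂μ, ∫ y, f (x, y) * log (f (x, y)) ∂ν ≤
      (∫ y, f (x, y) ∂ν) * log (∫ y, f (x, y) ∂ν) + R x)
    {L : Y → ℝ} (hL : Integrable L ν)
    (h_left : ∀ᵐ y ∂ν, ∫ x, f (x, y) * log (f (x, y)) ∂μ ≤
      (∫ x, f (x, y) ∂μ) * log (∫ x, f (x, y) ∂μ) + L y) :
    ∫ z, f z * log (f z) ∂μ.prod ν ≤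
      (∫ z, f z ∂μ.prod ν) * log (∫ z, f z ∂μ.prod ν) + ∫ x, R x ∂μ + ∫ y, L y ∂ν := by
  have fst_ge := h_right.mono fun x hx => sub_le_iff_le_add.2 hx
  have snd_ge := h_left.mono fun y hy => sub_le_iff_le_add.2 hy
  have fst_lower := h_ent.integral_prod_left.sub hR
  have snd_lower := h_ent.integral_prod_right.sub hL
  have h_fst := integrable_mul_log_marginal hf hf_pos h_ent fst_lower fst_ge snd_lower snd_ge
  have h_snd : Integrable (fun z => f z * log (∫ x, f (x, z.2) ∂μ)) (μ.prod ν) :=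
    (integrable_mul_log_marginal hf.swap (fun z => hf_pos z.swap) h_ent.swap
      snd_lower snd_ge fst_lower fst_ge).swap
  have subadditivity := integral_mul_log_marginals_le hf hf_pos h_ent h_fst h_snd
  have fst_int : Integrable (fun x => (∫ y, f (x, y) ∂ν) * log (∫ y, f (x, y) ∂ν)) μ := by
    simpa only [integral_mul_const] using h_fst.integral_prod_left
  have snd_int : Integrable (fun y => (∫ x, f (x, y) ∂μ) * log (∫ x, f (x, y) ∂μ)) ν := by
    simpa only [integral_mul_const] using h_snd.integral_prod_right
  have right := integral_mono_ae h_ent.integral_prod_left (fst_int.add hR) h_right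
  have left := integral_mono_ae h_ent.integral_prod_right (snd_int.add hL) h_left
  simp only [Pi.add_apply] at right left
  rw [← integral_prod _ h_ent, integral_add fst_int hR] at right
  rw [← integral_prod_symm _ h_ent, integral_add snd_int hL] at left
  linarith

end Subadditivity

section LogSobolev

open ProbabilityTheory NNReal

variable {ι κ E F : Type*} [Fintype ι] [Fintype κ]
  [NormedAddCommGroup E] [NormedSpace ℝ E] [MeasurableSpace E]
  [NormedAddCommGroup F] [NormedSpace ℝ F] [MeasurableSpace F]

/-- The Euclidean logarithmic Sobolev inequality for the measure `μ`, with the Fisher information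
taken along the directions `b`, as a family of inequalities linear in the Fisher information: `v` is
the variance of the Gaussian with which `f` is compared. The mass of `f` is left free so that the
inequality applies to slices of a density. -/
def EuclideanLogSobolev (μ : Measure E) (b : ι → E) : Prop :=
  ∀ ⦃f : E → ℝ⦄, Differentiable ℝ f → (∀ x, 0 < f x) → Integrable f μ →
    Integrable (fun x => f x * log (f x)) μ →
    (∀ i, Integrable (fun x => fderiv ℝ f x (b i) ^ 2 / f x) μ) → ∀ ⦃v : ℝ⦄, 0 < v →
    ∫ x, f x * log (f x) ∂μ ≤
      (∫ x, f x ∂μ) * log (∫ x, f x ∂μ) +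
        (v / 2 * ∑ i, ∫ x, fderiv ℝ f x (b i) ^ 2 / f x ∂μ -
          Fintype.card ι * (1 + log (2 * π * v) / 2) * ∫ x, f x ∂μ)

theorem mul_log_sub_le_deriv_of_transport {y y' t t' m : ℝ} {v : ℝ≥0} (hv : v ≠ 0) (hy : 0 < y)
    (hm : 0 < m) (ht' : t' = y / (m * gaussianPDFReal 0 v t)) :
    y * log y - v / 2 * (y' ^ 2 / y) - y * (log m - (1 + log (2 * π * v) / 2)) ≤
      y' * t + y * t' := by
  have density_pos : 0 < gaussianPDFReal 0 v t := gaussianPDFReal_pos 0 v t hv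
  have t'_pos : 0 < t' := ht' ▸ by positivity
  have change_of_variables : log y = log m + log (gaussianPDFReal 0 v t) + log t' := by
    rw [← log_mul hm.ne' density_pos.ne', ← log_mul (by positivity) t'_pos.ne', ht',
      mul_div_cancel₀ _ (by positivity)]
  have log_le : y * log t' ≤ y * (t' - 1) :=
    mul_le_mul_of_nonneg_left (log_le_sub_one_of_pos t'_pos) hy.le
  have square : 0 ≤ v / 2 * (y' ^ 2 / y) + y' * t + y * (t ^ 2 / (2 * v)) := by
    have : 0 ≤ (v * y' + y * t) ^ 2 / (2 * v * y) := by positivity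
    convert this using 1
    field_simp
    ring
  rw [change_of_variables, log_gaussianPDFReal 0 hv, sub_zero]
  linarith

theorem integral_mul_log_le_real {f f' : ℝ → ℝ} (hf' : ∀ x, HasDerivAt f (f' x) x)
    (hf_pos : ∀ x, 0 < f x) (hf : Integrable f) (h_ent : Integrable fun x => f x * log (f x))
    (h_fisher : Integrable fun x => f' x ^ 2 / f x) {v : ℝ≥0} (hv : v ≠ 0) :
    ∫ x, f x * log (f x) ≤
      (∫ x, f x) * log (∫ x, f x) +
        (v / 2 * (∫ x, f' x ^ 2 / f x) - (1 + log (2 * π * v) / 2) * ∫ x, f x) := by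
  set m := ∫ x, f x
  set γ := gaussianPDFReal 0 v
  have m_pos : 0 < m := integral_pos_of_forall_pos hf_pos hf
  have γ_pos (z : ℝ) : 0 < γ z := gaussianPDFReal_pos 0 v z hv
  obtain ⟨T, hT⟩ : ∃ T : ℝ → ℝ, ∀ x, HasDerivAt T (f x / (m * γ (T x))) x :=
    exists_hasDerivAt_transport (continuous_iff_continuousAt.2 fun x => (hf' x).continuousAt)
      hf_pos hf ((continuous_gaussianPDFReal 0 v).const_mul m) (fun z => mul_pos m_pos (γ_pos z))
      ((integrable_gaussianPDFReal 0 v).const_mul m)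
      (by rw [integral_const_mul, integral_gaussianPDFReal_eq_one 0 hv, mul_one])
  have antideriv (x) : HasDerivAt (fun x => -(v * m * γ (T x))) (f x * T x) x := by
    refine (((hasDerivAt_gaussianPDFReal_zero v (T x)).comp x (hT x)).const_mul
      (v * m)).neg.congr_deriv ?_
    have : gaussianPDFReal 0 v (T x) ≠ 0 := (γ_pos (T x)).ne'
    simp only [γ]
    field_simp
  have bounded (x) : |-(v * m * γ (T x))| ≤ v * m * (√(2 * π * v))⁻¹ := by
    rw [abs_neg, abs_of_pos (by have := γ_pos (T x); positivity)]
    exact mul_le_mul_of_nonneg_left (gaussianPDFReal_le 0 v _) (by positivity)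
  have fisher_int := h_fisher.const_mul (v / 2 : ℝ)
  have mass_int := hf.mul_const (log m - (1 + log (2 * π * v) / 2))
  have := integral_nonpos_of_le_deriv_of_bounded_antideriv antideriv bounded
    (fun x => (hf' x).mul (hT x)) ((h_ent.sub fisher_int).sub mass_int)
    fun x => mul_log_sub_le_deriv_of_transport hv (hf_pos x) m_pos rfl
  rw [integral_sub' (h_ent.sub fisher_int) mass_int, integral_sub' h_ent fisher_int,
    integral_const_mul, integral_mul_const] at this
  linarith

theorem euclideanLogSobolev_real :
    EuclideanLogSobolev (volume : Measure ℝ) fun _ : Unit => (1 : ℝ) := by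
  intro f hf_diff hf_pos hf h_ent h_fisher v hv
  lift v to ℝ≥0 using hv.le
  have := integral_mul_log_le_real (fun x => (hf_diff x).hasDerivAt) hf_pos hf h_ent
    (h_fisher ()) (NNReal.coe_pos.1 hv).ne'
  simpa using this

theorem measurePreserving_finConsEquivL (n : ℕ) :
    MeasurePreserving (Fin.consEquivL ℝ fun _ : Fin (n + 1) => ℝ) := by
  have cons_eq : ⇑(Fin.consEquivL ℝ fun _ : Fin (n + 1) => ℝ) =
      (MeasurableEquiv.piFinSuccAbove (fun _ => ℝ) 0).symm :=
    funext fun z => (Fin.insertNth_zero' z.1 z.2).symm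
  rw [cons_eq]
  exact (volume_preserving_piFinSuccAbove (fun _ : Fin (n + 1) => ℝ) 0).symm _

namespace EuclideanLogSobolev

variable {μ : Measure E} {ν : Measure F} {b : ι → E} {c : κ → F}

theorem exists_integrable_slice_bound {X : Type*} [MeasurableSpace X] {ρ : Measure X} [SFinite ρ]
    [SFinite μ] (hμ : EuclideanLogSobolev μ b) {f : X × E → ℝ}
    (hf_diff : ∀ x, Differentiable ℝ fun y => f (x, y)) (hf_pos : ∀ z, 0 < f z)
    (hf : Integrable f (ρ.prod μ)) (h_ent : Integrable (fun z => f z * log (f z)) (ρ.prod μ))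
    {D : ι → X × E → ℝ} (hD : ∀ i x y, fderiv ℝ (fun y => f (x, y)) y (b i) = D i (x, y))
    (h_fisher : ∀ i, Integrable (fun z => D i z ^ 2 / f z) (ρ.prod μ)) {v : ℝ} (hv : 0 < v) :
    ∃ R : X → ℝ, Integrable R ρ ∧
      ∫ x, R x ∂ρ = v / 2 * ∑ i, ∫ z, D i z ^ 2 / f z ∂ρ.prod μ -
        Fintype.card ι * (1 + log (2 * π * v) / 2) * ∫ z, f z ∂ρ.prod μ ∧
      ∀ᵐ x ∂ρ, ∫ y, f (x, y) * log (f (x, y)) ∂μ ≤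
        (∫ y, f (x, y) ∂μ) * log (∫ y, f (x, y) ∂μ) + R x := by
  have fisher_int : Integrable (fun x => v / 2 * ∑ i, ∫ y, D i (x, y) ^ 2 / f (x, y) ∂μ) ρ :=
    (integrable_finsetSum _ fun i _ => (h_fisher i).integral_prod_left).const_mul _
  have mass_int := hf.integral_prod_left.const_mul (Fintype.card ι * (1 + log (2 * π * v) / 2))
  refine ⟨fun x => _ - _, fisher_int.sub mass_int, ?_, ?_⟩
  · rw [integral_sub fisher_int mass_int, integral_const_mul, integral_const_mul,
      integral_finsetSum _ fun i _ => (h_fisher i).integral_prod_left, integral_prod _ hf]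
    simp only [integral_prod _ (h_fisher _)]
  · filter_upwards [hf.prod_right_ae, h_ent.prod_right_ae,
      ae_all_iff.2 fun i => (h_fisher i).prod_right_ae] with x hx hx_ent hx_fisher
    simp only [← hD] at hx_fisher ⊢
    exact hμ (hf_diff x) (fun y => hf_pos (x, y)) hx hx_ent hx_fisher hv

theorem prod [SFinite μ] [SFinite ν] [NeZero μ] [NeZero ν] (hμ : EuclideanLogSobolev μ b)
    (hν : EuclideanLogSobolev ν c) :
    EuclideanLogSobolev (μ.prod ν)
      (Sum.elim (fun i => (b i, (0 : F))) fun j => ((0 : E), c j)) := by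
  intro f hf_diff hf_pos hf h_ent h_fisher v hv
  have fderiv_fst (x : E) (y : F) (w : E) :
      fderiv ℝ (fun x => f (x, y)) x w = fderiv ℝ f (x, y) (w, 0) :=
    DFunLike.congr_fun (HasFDerivAt.comp (f := fun x => (x, y)) x (hf_diff _).hasFDerivAt
      (hasFDerivAt_prodMk_left x y)).fderiv w
  have fderiv_snd (x : E) (y : F) (w : F) :
      fderiv ℝ (fun y => f (x, y)) y w = fderiv ℝ f (x, y) (0, w) :=
    DFunLike.congr_fun (HasFDerivAt.comp (f := fun y => (x, y)) y (hf_diff _).hasFDerivAt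
      (hasFDerivAt_prodMk_right x y)).fderiv w
  obtain ⟨R, R_int, R_eq, h_right⟩ := hν.exists_integrable_slice_bound
    (fun x => hf_diff.comp ((differentiable_const x).prodMk differentiable_id)) hf_pos hf h_ent
    (fun j x y => fderiv_snd x y (c j)) (fun j => h_fisher (.inr j)) hv
  obtain ⟨L, L_int, L_eq, h_left⟩ := hμ.exists_integrable_slice_bound (f := f ∘ Prod.swap)
    (D := fun i z => fderiv ℝ f z.swap (b i, 0))
    (fun y => hf_diff.comp (differentiable_id.prodMk (differentiable_const y)))
    (fun z => hf_pos z.swap) hf.swap h_ent.swap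
    (fun i y x => fderiv_fst x y (b i)) (fun i => (h_fisher (.inl i)).swap) hv
  have fisher_swap (i : ι) : ∫ z : F × E, fderiv ℝ f z.swap (b i, 0) ^ 2 / f z.swap ∂ν.prod μ =
      ∫ z, fderiv ℝ f z (b i, 0) ^ 2 / f z ∂μ.prod ν :=
    integral_prod_swap fun z => fderiv ℝ f z (b i, 0) ^ 2 / f z
  have := integral_mul_log_le_of_slices hf hf_pos h_ent R_int h_right L_int h_left
  simp only [R_eq, L_eq, Function.comp_apply, fisher_swap, integral_prod_swap f, Sum.elim_inr]
    at this
  simp only [Fintype.sum_sum_type, Sum.elim_inl, Sum.elim_inr, Fintype.card_sum, Nat.cast_add]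
  linarith

theorem map [BorelSpace E] [BorelSpace F] (h : EuclideanLogSobolev μ b) (e : E ≃L[ℝ] F)
    (he : MeasurePreserving e μ ν) (σ : κ ≃ ι) (hc : ∀ j, c j = e (b (σ j))) :
    EuclideanLogSobolev ν c := by
  intro f hf_diff hf_pos hf h_ent h_fisher v hv
  have emb : MeasurableEmbedding e := e.toHomeomorph.measurableEmbedding
  have fderiv_comp (x : E) (i : ι) :
      fderiv ℝ (f ∘ e) x (b i) = fderiv ℝ f (e x) (c (σ.symm i)) := by
    rw [fderiv_comp x (hf_diff _) e.differentiableAt, e.fderiv, hc, σ.apply_symm_apply]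
    rfl
  have fisher_eq (j : κ) : ∫ x, fderiv ℝ f (e x) (c j) ^ 2 / f (e x) ∂μ =
      ∫ y, fderiv ℝ f y (c j) ^ 2 / f y ∂ν :=
    he.integral_comp emb fun y => fderiv ℝ f y (c j) ^ 2 / f y
  have pulled_back := h (hf_diff.comp e.differentiable) (fun x => hf_pos (e x))
    ((he.integrable_comp_emb emb).2 hf) ((he.integrable_comp_emb emb).2 h_ent)
    (fun i => by
      simp only [fderiv_comp]
      exact (he.integrable_comp_emb emb).2 (h_fisher (σ.symm i))) hv
  simp only [fderiv_comp, Function.comp_apply, he.integral_comp emb f,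
    he.integral_comp emb fun y => f y * log (f y), fisher_eq, ← Fintype.card_congr σ] at pulled_back
  rwa [Equiv.sum_comp σ.symm fun j => ∫ y, fderiv ℝ f y (c j) ^ 2 / f y ∂ν] at pulled_back

theorem pi_fin (n : ℕ) : EuclideanLogSobolev (volume : Measure (Fin n → ℝ))
    fun i => Pi.single i (1 : ℝ) := by
  induction n with
  | zero =>
    intro f _ _ _ _ _ v _
    have volume_eq : (volume : Measure (Fin 0 → ℝ)) = .dirac default := by
      rw [volume_pi, Measure.pi_of_empty _ default]
    simp [volume_eq]
  | succ n ih =>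
    refine (euclideanLogSobolev_real.prod ih).map (Fin.consEquivL ℝ fun _ => ℝ)
      (measurePreserving_finConsEquivL n)
      ((finSuccEquiv n).trans ((Equiv.optionEquivSumPUnit _).trans (Equiv.sumComm _ _))) fun j => ?_
    refine Fin.cases ?_ (fun i => ?_) j <;> ext k <;> refine Fin.cases ?_ (fun l => ?_) k <;>
      simp [Pi.single_apply]

end EuclideanLogSobolev

end LogSobolev

section FisherInformation

variable {E : Type*} [NormedAddCommGroup E] [InnerProductSpace ℝ E] [FiniteDimensional ℝ E]
  {f : E → ℝ}

theorem sum_fderiv_sq {ι : Type*} [Fintype ι] (b : OrthonormalBasis ι ℝ E) (f : E → ℝ) (x : E) :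
    ∑ i, fderiv ℝ f x (b i) ^ 2 = ‖gradient f x‖ ^ 2 := by
  simp only [← b.sum_sq_norm_inner_left (gradient f x), inner_gradient_left, norm_eq_abs, sq_abs]

theorem fderiv_apply_sq_div_le {ι : Type*} [Fintype ι] (b : OrthonormalBasis ι ℝ E)
    (hf_pos : ∀ x, 0 < f x) (i : ι) (x : E) :
    fderiv ℝ f x (b i) ^ 2 / f x ≤ ‖gradient f x‖ ^ 2 / f x := by
  rw [← sum_fderiv_sq b]
  exact div_le_div_of_nonneg_right
    (Finset.single_le_sum (fun j _ => sq_nonneg (fderiv ℝ f x (b j))) (Finset.mem_univ i))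
    (hf_pos x).le

variable [MeasurableSpace E] [BorelSpace E]

theorem integrable_fderiv_sq_div {ι : Type*} [Fintype ι] (b : OrthonormalBasis ι ℝ E)
    (hf : Continuous f) (hf_pos : ∀ x, 0 < f x)
    (h_fisher : Integrable fun x => ‖gradient f x‖ ^ 2 / f x) (i : ι) :
    Integrable fun x => fderiv ℝ f x (b i) ^ 2 / f x := by
  refine h_fisher.mono' (((measurable_fderiv_apply_const ℝ f (b i)).pow_const 2).div
    hf.measurable).aestronglyMeasurable (.of_forall fun x => ?_)
  rw [norm_of_nonneg (div_nonneg (sq_nonneg _) (hf_pos x).le)]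
  exact fderiv_apply_sq_div_le b hf_pos i x

theorem EuclideanLogSobolev.orthonormalBasis {n : ℕ} (b : OrthonormalBasis (Fin n) ℝ E) :
    EuclideanLogSobolev volume b := by
  refine (pi_fin n).map ((PiLp.continuousLinearEquiv 2 ℝ fun _ => ℝ).symm.trans
    b.repr.symm.toContinuousLinearEquiv) ?_ (Equiv.refl _) fun i => ?_
  · exact b.measurePreserving_repr_symm.comp (PiLp.volume_preserving_toLp (Fin n))
  · exact (b.repr_symm_single i).symm

theorem integral_mul_log_le_of_fisherInformation (hf_diff : Differentiable ℝ f)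
    (hf_pos : ∀ x, 0 < f x) (hf : Integrable f) (h_ent : Integrable fun x => f x * log (f x))
    (h_fisher : Integrable fun x => ‖gradient f x‖ ^ 2 / f x) {v : ℝ} (hv : 0 < v) :
    ∫ x, f x * log (f x) ≤
      (∫ x, f x) * log (∫ x, f x) + (v / 2 * (∫ x, ‖gradient f x‖ ^ 2 / f x) -
        Module.finrank ℝ E * (1 + log (2 * π * v) / 2) * ∫ x, f x) := by
  set b := stdOrthonormalBasis ℝ E
  have partial_int := integrable_fderiv_sq_div b hf_diff.continuous hf_pos h_fisher
  have := EuclideanLogSobolev.orthonormalBasis b hf_diff hf_pos hf h_ent partial_int hv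
  simpa only [← integral_finsetSum _ fun i _ => partial_int i, ← Finset.sum_div, sum_fderiv_sq,
    Fintype.card_fin] using this

end FisherInformation

section EntropyPower

variable {d I s : ℝ}

theorem pos_of_forall_le_variance (hd : 0 < d) (hI : 0 ≤ I)
    (h : ∀ v > 0, s ≤ v / 2 * I - d * (1 + log (2 * π * v) / 2)) : 0 < I := by
  refine hI.lt_of_ne fun hI_zero => ?_
  have := h (exp (-(2 * s / d)) / (2 * π)) (by positivity)
  rw [← hI_zero, mul_zero, mul_div_cancel₀ _ (by positivity), log_exp] at this
  have cancel : d * (1 + -(2 * s / d) / 2) = d - s := by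
    field_simp
    ring
  linarith

theorem le_mul_log_of_forall_le_variance (hd : 0 < d) (hI : 0 < I)
    (h : ∀ v > 0, s ≤ v / 2 * I - d * (1 + log (2 * π * v) / 2)) :
    s ≤ d / 2 * log (1 / (2 * π * exp 1 * d) * I) := by
  calc s ≤ d / I / 2 * I - d * (1 + log (2 * π * (d / I)) / 2) := h (d / I) (by positivity)
    _ = d / 2 * -(1 + log (2 * π * (d / I))) := by field_simp; ring
    _ = d / 2 * log (1 / (2 * π * exp 1 * d) * I) := by
      rw [← log_exp 1, ← log_mul (by positivity) (by positivity), ← log_inv, log_exp]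
      congr 2
      field_simp

theorem le_mul_exp_of_le_mul_log {A : ℝ} (hd : 0 < d) (hA : 0 < A) (hI : 0 < I)
    (h : s ≤ d / 2 * log (1 / A * I)) : A ≤ I * exp (2 / d * -s) := by
  have h_log : -log (1 / A * I) ≤ 2 / d * -s := by
    have := mul_le_mul_of_nonneg_left h (by positivity : 0 ≤ 2 / d)
    field_simp at this ⊢
    linarith
  calc A = I * exp (-log (1 / A * I)) := by
        rw [exp_neg, exp_log (by positivity)]
        field_simp
    _ ≤ I * exp (2 / d * -s) := by gcongr

end EntropyPower

theorem entropy_isoperimetric_inequality_general {E : Type*} [NormedAddCommGroup E]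
    [InnerProductSpace ℝ E] [FiniteDimensional ℝ E] [Nontrivial E] [MeasurableSpace E]
    [BorelSpace E] {f : E → ℝ} (hf_diff : Differentiable ℝ f) (hf_pos : ∀ x, 0 < f x)
    (hf_int : ∫ x, f x = 1) (hf_ent : Integrable fun x => f x * log (f x))
    (hf_fisher : Integrable fun x => ‖gradient f x‖ ^ 2 / f x) :
    2 * π * exp 1 * Module.finrank ℝ E ≤
      (∫ x, ‖gradient f x‖ ^ 2 / f x) *
        exp (2 / Module.finrank ℝ E * -∫ x, f x * log (f x)) ∧
    ∫ x, f x * log (f x) ≤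
      Module.finrank ℝ E / 2 *
        log (1 / (2 * π * exp 1 * Module.finrank ℝ E) * ∫ x, ‖gradient f x‖ ^ 2 / f x) := by
  have hd : (0 : ℝ) < Module.finrank ℝ E := Nat.cast_pos.2 Module.finrank_pos
  have hf : Integrable f := .of_integral_ne_zero (hf_int ▸ one_ne_zero)
  have h_variance (v : ℝ) (hv : v > 0) :=
    integral_mul_log_le_of_fisherInformation hf_diff hf_pos hf hf_ent hf_fisher hv
  simp only [hf_int, log_one, mul_one, mul_zero, zero_add] at h_variance
  have hI : 0 < ∫ x, ‖gradient f x‖ ^ 2 / f x :=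
    pos_of_forall_le_variance hd
      (integral_nonneg fun x => div_nonneg (sq_nonneg _) (hf_pos x).le) h_variance
  have h_log := le_mul_log_of_forall_le_variance hd hI h_variance
  exact ⟨le_mul_exp_of_le_mul_log hd (by positivity) hI h_log, h_log⟩

/-- Stam's entropy isoperimetric inequality on `ℝⁿ`: `I(f)·N(f) ≥ 2πen`, equivalently
`∫ f log f ≤ (n/2) log((1/(2πen)) ∫ |∇f|²/f)`. -/
theorem entropy_isoperimetric_inequality (n : ℕ) (hn : 1 ≤ n)
    (f : EuclideanSpace ℝ (Fin n) → ℝ)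
    (hf_smooth : ContDiff ℝ (⊤ : ℕ∞) f) (hf_pos : ∀ x, 0 < f x)
    (hf_int : ∫ x, f x = 1)
    (hf_ent : Integrable (fun x => f x * Real.log (f x)))
    (hf_fisher : Integrable (fun x => ‖gradient f x‖ ^ 2 / f x)) :
    2 * π * Real.exp 1 * n ≤
      (∫ x, ‖gradient f x‖ ^ 2 / f x) *
        Real.exp ((2 / (n : ℝ)) * (-∫ x, f x * Real.log (f x))) ∧
    ∫ x, f x * Real.log (f x) ≤
      ((n : ℝ) / 2) *
        Real.log ((1 / (2 * π * Real.exp 1 * n)) * ∫ x, ‖gradient f x‖ ^ 2 / f x) := by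
  have : Nonempty (Fin n) := ⟨⟨0, hn⟩⟩
  simpa only [finrank_euclideanSpace_fin] using entropy_isoperimetric_inequality_general
    (hf_smooth.differentiable (by simp)) hf_pos hf_int hf_ent hf_fisher
end
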